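/- arXiv:2203.10293 — 5 statements merged into one kernel-verified Lean document; each statement's English description precedes it below -/
import Mathlib

section
/- Let n ≥ 2, let P be a partition of [ω]^n, let Q ∈ P*, let X ⊆ ℕ be infinite with [X]^{2n} ⊆ Q, and let m = n^{n·B·(B−1)} where B = binomial(2n,n). Then for every x ∈ [X⁻]^n with sparsity d(x) ≥ m there is an (n·B·(B−1))-cascade x_0, x_1, …, x_l such that x_0 = x and x_0 ∩ x_l = { x_[i] : i ∈ I(Q) }. -/
/-! Common definitions. -/

/-- The `i`-th smallest element of a finite set of naturals (default 0 if `i ≥ |s|`). -/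
def nth (s : Finset ℕ) (i : ℕ) : ℕ := (s.sort (· ≤ ·)).getD i 0

/-- `[ω]^n` : the set of `n`-element subsets of `ℕ` (as `Finset`s). -/
def cube (n : ℕ) : Set (Finset ℕ) := {s | s.card = n}

/-- `P` is a partition of `Z` (one member may be empty). -/
def IsPartitionOn (Z : Set (Finset ℕ)) (P : Set (Set (Finset ℕ))) : Prop :=
  ⋃₀ P = Z ∧ ∀ A ∈ P, ∀ B ∈ P, A ∩ B = ∅ ∨ A = B

/-- The equivalence relation `≈_P` induced by a partition `P`. -/
def EquivP (P : Set (Set (Finset ℕ))) (p q : Finset ℕ) : Prop := ∃ A ∈ P, p ∈ A ∧ q ∈ A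

/-- `X` is `I`-canonical for a partition `P` of `[ω]^n`. -/
def ICanon (n : ℕ) (P : Set (Set (Finset ℕ))) (I : Set ℕ) (X : Set ℕ) : Prop :=
  ∀ p q : Finset ℕ, ↑p ⊆ X → p.card = n → ↑q ⊆ X → q.card = n →
    (EquivP P p q ↔ ∀ i ∈ I, nth p i = nth q i)

/-- `X` is canonical for a partition `P` of `[ω]^n`. -/
def Canon (n : ℕ) (P : Set (Set (Finset ℕ))) (X : Set ℕ) : Prop :=
  ∃ I : Set ℕ, I ⊆ Set.Iio n ∧ ICanon n P I X

/-- `X` is homogeneous for a partition `P` of `[ω]^n`. -/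
def Homog (n : ℕ) (P : Set (Set (Finset ℕ))) (X : Set ℕ) : Prop :=
  ∃ A ∈ P, ∀ s : Finset ℕ, ↑s ⊆ X → s.card = n → s ∈ A

/-- `[2n]^n` : the `n`-element subsets of `{0, …, 2n-1}`. -/
def idx (n : ℕ) : Finset (Finset ℕ) := Finset.powersetCard n (Finset.range (2 * n))

/-- The set `Q_{pq} = { z ∈ [ω]^{2n} : {z_[i] : i ∈ p} ≈_P {z_[i] : i ∈ q} }`. -/
def Qpq (n : ℕ) (P : Set (Set (Finset ℕ))) (p q : Finset ℕ) : Set (Finset ℕ) :=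
  {z | z.card = 2 * n ∧ EquivP P (p.image (nth z)) (q.image (nth z))}

/-- `P*` : the atoms of the field of subsets of `[ω]^{2n}` generated by the sets `Q_{pq}`. -/
def Atoms (n : ℕ) (P : Set (Set (Finset ℕ))) : Set (Set (Finset ℕ)) :=
  {Q | Q.Nonempty ∧ ∃ S : Finset ℕ → Finset ℕ → Set (Finset ℕ),
    (∀ p ∈ idx n, ∀ q ∈ idx n, S p q = Qpq n P p q ∨ S p q = cube (2 * n) \ Qpq n P p q) ∧
    Q = ⋂ p ∈ idx n, ⋂ q ∈ idx n, S p q}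

/-- `I_{pq} = { i < n : p_[i] = q_[i] }`. -/
def Ipq (n : ℕ) (p q : Finset ℕ) : Set ℕ := {i | i < n ∧ nth p i = nth q i}

/-- `I(Q) = ⋂ { I_{pq} : p, q ∈ [2n]^n, Q ⊆ Q_{pq} }`. -/
def IofQ (n : ℕ) (P : Set (Set (Finset ℕ))) (Q : Set (Finset ℕ)) : Set ℕ :=
  ⋂ p ∈ idx n, ⋂ q ∈ idx n, ⋂ (_ : Q ⊆ Qpq n P p q), Ipq n p q

/-- `ρ(a,b) = |(a △ b) ∩ X|`, identifying `a` with `{0, …, a-1}`. -/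
noncomputable def rho (X : Set ℕ) (a b : ℕ) : ℕ := (X ∩ Set.Ico (min a b) (max a b)).ncard

/-- The sparsity `d(x) = min { ρ(a,b) : a, b ∈ x ∪ {e}, a ≠ b }` (with `d(∅) = ⊤ = ω`). -/
noncomputable def sparsity (X : Set ℕ) (e : ℕ) (x : Finset ℕ) : ℕ∞ :=
  ⨅ a ∈ (x ∪ {e} : Finset ℕ), ⨅ b ∈ (x ∪ {e} : Finset ℕ), ⨅ _ : a ≠ b, (rho X a b : ℕ∞)

/-- `r(x,y) = max_{b ∈ y} min { ρ(a,b) : a ∈ x ∪ {e}, a ≤ b }`. -/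
noncomputable def rfun (X : Set ℕ) (e : ℕ) (x y : Finset ℕ) : ℕ :=
  y.sup fun b => sInf ((fun a => rho X a b) '' {a : ℕ | a ∈ (x ∪ {e} : Finset ℕ) ∧ a ≤ b})

/-- `x →_{pq} y` : there is `z ∈ [X]^{2n}` with `{z_[i] : i ∈ p} = x` and `{z_[i] : i ∈ q} = y`. -/
def Arrow (X : Set ℕ) (n : ℕ) (p q x y : Finset ℕ) : Prop :=
  ∃ z : Finset ℕ, ↑z ⊆ X ∧ z.card = 2 * n ∧ p.image (nth z) = x ∧ q.image (nth z) = y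

/-- `x ↔_Q y` : `x →_{pq} y` for some `p, q ∈ [2n]^n` with `Q ⊆ Q_{pq}`. -/
def RelQ (n : ℕ) (P : Set (Set (Finset ℕ))) (Q : Set (Finset ℕ)) (X : Set ℕ)
    (x y : Finset ℕ) : Prop :=
  ∃ p ∈ idx n, ∃ q ∈ idx n, Q ⊆ Qpq n P p q ∧ Arrow X n p q x y

/-- `x_0, …, x_l` is a `t`-cascade. -/
def IsCascade (n : ℕ) (P : Set (Set (Finset ℕ))) (Q : Set (Finset ℕ)) (X : Set ℕ) (e : ℕ)
    (t l : ℕ) (x : ℕ → Finset ℕ) : Prop :=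
  (∀ i ≤ l, ↑(x i) ⊆ X \ {e} ∧ (x i).card = n) ∧
  ∀ i < l, ((n ^ (t - 2 * i) : ℕ) : ℕ∞) ≤ sparsity X e (x i) ∧
    rfun X e (x i) (x (i + 1)) ≤ n ^ (t - 2 * i - 1) ∧
    RelQ n P Q X (x i) (x (i + 1))

/-- The `n`-fold Fubini power `u ⊗ ⋯ ⊗ u` of an ultrafilter on `ℕ`, as an
ultrafilter on `Fin n → ℕ`. -/
noncomputable def tensorPow (u : Ultrafilter ℕ) : (n : ℕ) → Ultrafilter (Fin n → ℕ)
  | 0 => pure (fun i => i.elim0)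
  | n + 1 => u.bind fun a => (tensorPow u n).map (Fin.cons a)

/-- The diagonal ultrafilter extension `f̃(u, u, …, u)` of `f : ℕ^n → ℕ`. -/
noncomputable def diagExt {n : ℕ} (f : (Fin n → ℕ) → ℕ) (u : Ultrafilter ℕ) : Ultrafilter ℕ :=
  (tensorPow u n).map f

/-- The Rudin–Keisler preorder. -/
def RKle (u v : Ultrafilter ℕ) : Prop := ∃ h : ℕ → ℕ, v.map h = u

/-- Rudin–Keisler equivalence. -/
def RKeq (u v : Ultrafilter ℕ) : Prop := RKle u v ∧ RKle v u

/-- `u` is nonprincipal: it contains no finite set. -/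
def Nonprincipal (u : Ultrafilter ℕ) : Prop := ∀ S : Set ℕ, S.Finite → S ∉ u

/-- `u` is a Ramsey ultrafilter. -/
def IsRamseyU (u : Ultrafilter ℕ) : Prop :=
  Nonprincipal u ∧ ∀ n : ℕ, 1 ≤ n → ∀ P : Set (Set (Finset ℕ)),
    IsPartitionOn (cube n) P → P.Finite → ∃ X ∈ u, Homog n P X

/-- `f : ℕ^n → ℕ` is selectively upward injective on `X` w.r.t. the index set `I`
(`I = ∅` gives "upward constant"). -/
def SelUpInjWrt (n : ℕ) (f : (Fin n → ℕ) → ℕ) (X : Set ℕ) (I : Set (Fin n)) : Prop :=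
  ∀ x y : Fin n → ℕ, (∀ i, x i ∈ X) → (∀ i, y i ∈ X) → StrictMono x → StrictMono y →
    (f x = f y ↔ ∀ i ∈ I, x i = y i)

theorem nth_eq_emb (z : Finset ℕ) (k i : ℕ) (hz : z.card = k) (h : i < k) :
    nth z i = z.orderEmbOfFin hz ⟨i, h⟩ := by
  subst hz
  rw [Finset.orderEmbOfFin_apply]
  unfold nth
  rw [List.getD_eq_getElem _ _ (by rw [Finset.length_sort]; exact h)]
  rfl

theorem nth_of {k : ℕ} (f : Fin k → ℕ) (hf : StrictMono f) (i : Fin k) :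
    nth (Finset.univ.image f) i = f i := by
  have hc : (Finset.univ.image f).card = k := by
    rw [Finset.card_image_of_injective _ hf.injective]; simp
  rw [nth_eq_emb _ k i hc i.2]
  have := Finset.orderEmbOfFin_unique hc (f := f) (by intro x; simp) hf
  rw [← this]

theorem nth_strictMono (z : Finset ℕ) (k : ℕ) (hz : z.card = k) :
    StrictMono (fun i : Fin k => nth z i) := by
  intro i j hij
  try simp only
  rw [nth_eq_emb z k i hz i.2, nth_eq_emb z k j hz j.2]
  exact (z.orderEmbOfFin hz).strictMono hij

theorem image_nth (z : Finset ℕ) (k : ℕ) (hz : z.card = k) :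
    Finset.univ.image (fun i : Fin k => nth z i) = z := by
  have : (fun i : Fin k => nth z i) = z.orderEmbOfFin hz := by
    funext i; exact nth_eq_emb z k i hz i.2
  rw [this]
  ext a
  have := Finset.range_orderEmbOfFin z hz
  have h2 : a ∈ Set.range (z.orderEmbOfFin hz) ↔ a ∈ (z : Set ℕ) := by rw [this]
  simpa using h2

theorem nth_mem (z : Finset ℕ) (i : ℕ) (h : i < z.card) : nth z i ∈ z := by
  rw [nth_eq_emb z z.card i rfl h]
  exact Finset.orderEmbOfFin_mem z rfl _

theorem nth_image_mono (z : Finset ℕ) (g : ℕ → ℕ) (hg : StrictMonoOn g z) (i : ℕ)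
    (h : i < z.card) : nth (z.image g) i = g (nth z i) := by
  have h1 := nth_of (fun i : Fin z.card => g (nth z i)) (by
    intro a b hab
    exact hg (nth_mem z a a.2) (nth_mem z b b.2) (nth_strictMono z _ rfl hab)) ⟨i, h⟩
  have h2 : Finset.univ.image (fun i : Fin z.card => g (nth z i)) = z.image g := by
    conv_rhs => rw [← image_nth z _ rfl]
    rw [Finset.image_image]; rfl
  rw [h2] at h1
  exact h1

theorem exists_pos (n : ℕ) (u z : Finset ℕ) (hu : u ⊆ z) (huc : u.card = n)
    (hz : z.card = 2 * n) : ∃ p ∈ idx n, p.image (nth z) = u := by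
  have him : ((Finset.range (2 * n)).filter (fun k => nth z k ∈ u)).image (nth z) = u := by
    ext a
    simp only [Finset.mem_image, Finset.mem_filter, Finset.mem_range]
    constructor
    · rintro ⟨k, ⟨_, h⟩, rfl⟩; exact h
    · intro ha
      have := hu ha
      rw [← image_nth z _ hz] at this
      obtain ⟨i, _, rfl⟩ := Finset.mem_image.1 this
      exact ⟨i, ⟨i.2, ha⟩, rfl⟩
  refine ⟨_, ?_, him⟩
  refine Finset.mem_powersetCard.2 ⟨Finset.filter_subset _ _, ?_⟩
  refine Eq.trans ?_ ((congrArg Finset.card him).trans huc)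
  rw [Finset.card_image_of_injOn]
  intro a ha b hb hab
  simp only [Finset.coe_filter, Finset.mem_range, Set.mem_setOf_eq] at ha hb
  have := (nth_strictMono z _ hz).injective (a₁ := ⟨a, ha.1⟩) (a₂ := ⟨b, hb.1⟩) hab
  simpa using this

theorem extend_mono (w : Finset ℕ) (g : ℕ → ℕ) (hg : StrictMonoOn g w) (N : ℕ)
    (hN : w.card ≤ N) : ∃ (w' : Finset ℕ) (g' : ℕ → ℕ), w ⊆ w' ∧ w'.card = N ∧
      StrictMonoOn g' w' ∧ ∀ a ∈ w, g' a = g a := by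
  induction N, hN using Nat.le_induction with
  | base => exact ⟨w, g, subset_rfl, rfl, hg, fun _ _ => rfl⟩
  | succ N hN ih =>
    obtain ⟨w', g', h1, h2, h3, h4⟩ := ih
    set a := w'.sup id + 1 with ha
    set b := (w'.image g').sup id + 1 with hb
    have hlt : ∀ c ∈ w', c < a := fun c hc => Nat.lt_succ_of_le (Finset.le_sup (f := id) hc)
    have hltb : ∀ c ∈ w', g' c < b := fun c hc =>
      Nat.lt_succ_of_le (Finset.le_sup (f := id) (Finset.mem_image_of_mem g' hc))
    have hna : a ∉ w' := fun h => lt_irrefl _ (hlt a h)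
    refine ⟨insert a w', Function.update g' a b, h1.trans (Finset.subset_insert _ _), ?_, ?_, ?_⟩
    · rw [Finset.card_insert_of_notMem hna, h2]
    · intro c hc d hd hcd
      simp only [Finset.coe_insert, Set.mem_insert_iff, Finset.mem_coe] at hc hd
      rcases hc with rfl | hc <;> rcases hd with rfl | hd
      · exact absurd hcd (lt_irrefl _)
      · exact absurd hcd (not_lt.2 (hlt d hd).le)
      · rw [Function.update_self, Function.update_of_ne hcd.ne]
        exact hltb c hc
      · rw [Function.update_of_ne (hlt c hc).ne, Function.update_of_ne (hlt d hd).ne]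
        exact h3 hc hd hcd
    · intro c hc
      rw [Function.update_of_ne (hlt c (h1 hc)).ne, h4 c hc]

/-- Equivalence of increasing index sequences. -/
def EE (P : Set (Set (Finset ℕ))) (φ : ℕ → ℕ) {n : ℕ} (f g : Fin n → ℕ) : Prop :=
  EquivP P ((Finset.univ.image f).image φ) ((Finset.univ.image g).image φ)

section core
variable {n : ℕ} {P : Set (Set (Finset ℕ))} {φ : ℕ → ℕ}

theorem pattern (hφ : StrictMono φ)
    (hom : ∀ p ∈ idx n, ∀ q ∈ idx n, ∀ z₁ z₂ : Finset ℕ, (z₁ : Set ℕ) ⊆ Set.range φ →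
      (z₂ : Set ℕ) ⊆ Set.range φ → z₁.card = 2 * n → z₂.card = 2 * n →
      z₁ ∈ Qpq n P p q → z₂ ∈ Qpq n P p q)
    (f f' h h' : Fin n → ℕ) (hf : StrictMono f) (hf' : StrictMono f')
    (hh : StrictMono h) (hh' : StrictMono h')
    (h1 : ∀ i j, f i < f' j ↔ h i < h' j) (h2 : ∀ i j, f' j < f i ↔ h' j < h i)
    (hE : EE P φ f f') : EE P φ h h' := by
  classical
  have heq : ∀ i j, f i = f' j → h i = h' j := by
    intro i j hij
    have := h1 i j
    have := h2 i j
    omega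
  set w := Finset.univ.image f ∪ Finset.univ.image f' with hw
  obtain ⟨g, hgf, hgf'⟩ : ∃ g : ℕ → ℕ, (∀ i, g (f i) = h i) ∧ (∀ i, g (f' i) = h' i) := by
    refine ⟨fun a => if H : ∃ i, f i = a then h H.choose else
      if H : ∃ i, f' i = a then h' H.choose else 0, ?_, ?_⟩
    · intro i
      have H : ∃ j, f j = f i := ⟨i, rfl⟩
      simp only [dif_pos H]
      rw [hf.injective H.choose_spec]
    · intro i
      by_cases H : ∃ j, f j = f' i
      · simp only [dif_pos H]
        exact heq _ _ H.choose_spec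
      · have H' : ∃ j, f' j = f' i := ⟨i, rfl⟩
        simp only [dif_neg H, dif_pos H']
        rw [hf'.injective H'.choose_spec]
  have hgw : StrictMonoOn g w := by
    intro a ha b hb hab
    simp only [hw, Finset.coe_union, Finset.coe_image, Finset.coe_univ, Set.image_univ,
      Set.mem_union, Set.mem_range] at ha hb
    rcases ha with ⟨i, rfl⟩ | ⟨i, rfl⟩ <;> rcases hb with ⟨j, rfl⟩ | ⟨j, rfl⟩
    · rw [hgf, hgf]; exact hh (hf.lt_iff_lt.1 hab)
    · rw [hgf, hgf']; exact (h1 i j).1 hab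
    · rw [hgf, hgf']; exact (h2 j i).1 hab
    · rw [hgf', hgf']; exact hh' (hf'.lt_iff_lt.1 hab)
  have cf : (Finset.univ.image f).card = n := by
    rw [Finset.card_image_of_injective _ hf.injective]; simp
  have cf' : (Finset.univ.image f').card = n := by
    rw [Finset.card_image_of_injective _ hf'.injective]; simp
  have hwc : w.card ≤ 2 * n := by
    have := Finset.card_union_le (Finset.univ.image f) (Finset.univ.image f')
    rw [← hw] at this
    omega
  obtain ⟨w', g', hsub, hc, hmono, hagree⟩ := extend_mono w g hgw (2 * n) hwc
  obtain ⟨p, hp, hpi⟩ := exists_pos n _ w' (Finset.subset_union_left.trans hsub) cf hc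
  obtain ⟨q, hq, hqi⟩ := exists_pos n _ w' (Finset.subset_union_right.trans hsub) cf' hc
  have hidx : ∀ p ∈ idx n, ∀ k ∈ p, k < w'.card := by
    intro p hp k hk
    have := (Finset.mem_powersetCard.1 hp).1 hk
    rw [hc]; simpa using this
  have hm2 : StrictMonoOn (φ ∘ g') w' := fun a ha b hb hab => hφ (hmono ha hb hab)
  have key : ∀ G : ℕ → ℕ, StrictMonoOn G w' → ∀ p ∈ idx n,
      p.image (nth (w'.image G)) = (p.image (nth w')).image G := by
    intro G hG p hp
    rw [Finset.image_image]
    apply Finset.image_congr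
    intro k hk
    exact nth_image_mono w' G hG k (hidx p hp k hk)
  have i1 : (Finset.univ.image f).image (φ ∘ g') = (Finset.univ.image h).image φ := by
    rw [Finset.image_image, Finset.image_image]
    apply Finset.image_congr
    intro i _
    simp only [Function.comp]
    rw [hagree _ (Finset.mem_union_left _ (Finset.mem_image_of_mem _ (Finset.mem_univ _))), hgf]
  have i2 : (Finset.univ.image f').image (φ ∘ g') = (Finset.univ.image h').image φ := by
    rw [Finset.image_image, Finset.image_image]
    apply Finset.image_congr
    intro i _
    simp only [Function.comp]
    rw [hagree _ (Finset.mem_union_right _ (Finset.mem_image_of_mem _ (Finset.mem_univ _))), hgf']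
  have := hom p hp q hq (w'.image φ) (w'.image (φ ∘ g'))
    (by intro a ha; simp at ha; obtain ⟨b, _, rfl⟩ := ha; exact ⟨_, rfl⟩)
    (by intro a ha; simp at ha; obtain ⟨b, _, rfl⟩ := ha; exact ⟨_, rfl⟩)
    (by rw [Finset.card_image_of_injective _ hφ.injective, hc])
    (by rw [Finset.card_image_of_injOn hm2.injOn, hc])
    ⟨by rw [Finset.card_image_of_injective _ hφ.injective, hc], by
      rw [key φ (hφ.strictMonoOn _) p hp, key φ (hφ.strictMonoOn _) q hq, hpi, hqi]
      exact hE⟩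
  have h3 := this.2
  rw [key _ hm2 p hp, key _ hm2 q hq, hpi, hqi, i1, i2] at h3
  exact h3

/-- Abstract form of the homogeneity. -/
def Pat {n : ℕ} (E : (Fin n → ℕ) → (Fin n → ℕ) → Prop) : Prop :=
  ∀ f f' h h' : Fin n → ℕ, StrictMono f → StrictMono f' → StrictMono h → StrictMono h' →
    (∀ i j, f i < f' j ↔ h i < h' j) → (∀ i j, f' j < f i ↔ h' j < h i) → E f f' → E h h'

/-- Index `k` can be moved freely. -/
def Mov {n : ℕ} (E : (Fin n → ℕ) → (Fin n → ℕ) → Prop) (k : Fin n) : Prop :=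
  ∀ f f' : Fin n → ℕ, StrictMono f → StrictMono f' → (∀ i, i ≠ k → f i = f' i) → E f f'

variable {E : (Fin n → ℕ) → (Fin n → ℕ) → Prop}

theorem bump_mono (f : Fin n → ℕ) (hf : StrictMono f) (k : Fin n) :
    StrictMono (fun i => if i = k then 3 * f i + 1 else 3 * f i) := by
  intro i j hij
  have := hf hij
  try simp only
  split_ifs <;> omega

theorem mov_one (pat : Pat E) (rfl' : ∀ f, StrictMono f → E f f)
    (sym : ∀ f g, E f g → E g f) (tr : ∀ f g h, E f g → E g h → E f h)
    (f f' : Fin n → ℕ) (hf : StrictMono f) (hf' : StrictMono f') (hE : E f f')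
    (k : Fin n) (hk : ∀ j, f k ≠ f' j) : Mov E k := by
  have m3 : StrictMono (fun i => 3 * f i) := by
    intro i j hij; have := hf hij; (try simp only); omega
  have m3' : StrictMono (fun i => 3 * f' i) := by
    intro i j hij; have := hf' hij; (try simp only); omega
  have mb := bump_mono f hf k
  have e1 : E (fun i => 3 * f i) (fun i => 3 * f' i) :=
    pat f f' _ _ hf hf' m3 m3' (by intro i j; (try simp only); omega) (by intro i j; (try simp only); omega) hE
  have e2 : E (fun i => if i = k then 3 * f i + 1 else 3 * f i) (fun i => 3 * f' i) := by
    refine pat f f' _ _ hf hf' mb m3' ?_ ?_ hE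
    · intro i j
      try simp only
      split_ifs with h
      · subst h; have := hk j; omega
      · omega
    · intro i j
      try simp only
      split_ifs with h
      · subst h; have := hk j; omega
      · omega
  have e3 := tr _ _ _ e1 (sym _ _ e2)
  have up : ∀ g g' : Fin n → ℕ, StrictMono g → StrictMono g' → (∀ i, i ≠ k → g i = g' i) →
      g k < g' k → E g g' := by
    intro g g' hg hg' hgg hlt
    refine pat _ _ g g' m3 mb hg hg' ?_ ?_ e3
    · intro i j
      by_cases hj : j = k
      · subst hj
        by_cases hi : i = j
        · subst hi; simp [hlt]
        · rw [hgg i hi, hg'.lt_iff_lt]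
          simp only [if_true]
          rw [← hf.lt_iff_lt]
          have : f i ≠ f j := fun h => hi (hf.injective h)
          omega
      · rw [← hgg j hj, hg.lt_iff_lt, ← hf.lt_iff_lt]
        simp only [if_neg hj]; omega
    · intro i j
      by_cases hj : j = k
      · subst hj
        by_cases hi : i = j
        · subst hi; simp; omega
        · rw [hgg i hi, hg'.lt_iff_lt]
          simp only [if_true]
          rw [← hf.lt_iff_lt]
          have : f i ≠ f j := fun h => hi (hf.injective h)
          omega
      · rw [← hgg j hj, hg.lt_iff_lt, ← hf.lt_iff_lt]
        simp only [if_neg hj]; omega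
  intro g g' hg hg' hgg
  rcases lt_trichotomy (g k) (g' k) with h | h | h
  · exact up g g' hg hg' hgg h
  · have : g = g' := by
      funext i
      by_cases hi : i = k
      · rw [hi, h]
      · exact hgg i hi
    rw [this]; exact rfl' _ hg'
  · exact sym _ _ (up g' g hg' hg (fun i hi => (hgg i hi).symm) h)

theorem mov_two (pat : Pat E) (rfl' : ∀ f, StrictMono f → E f f)
    (sym : ∀ f g, E f g → E g f) (tr : ∀ f g h, E f g → E g h → E f h) (k : Fin n) :
    ∀ (f f' : Fin n → ℕ) (_ : StrictMono f) (_ : StrictMono f') (_ : E f f')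
    (_ : f k ≠ f' k), Mov E k := by
  induction k using WellFoundedLT.induction with
  | _ k ih =>
  have main : ∀ (f f' : Fin n → ℕ) (_ : StrictMono f) (_ : StrictMono f') (_ : E f f')
      (_ : f k < f' k), Mov E k := by
    intro f f' hf hf' hE hlt
    by_cases hr : ∀ j, f k ≠ f' j
    · exact mov_one pat rfl' sym tr f f' hf hf' hE k hr
    · push Not at hr
      obtain ⟨j, hj⟩ := hr
      have hjk : j < k := by
        rw [← hf'.lt_iff_lt]; omega
      have hmj : Mov E j := ih j hjk f f' hf hf' hE (by have := hf hjk; omega)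
      have m3 : StrictMono (fun i => 3 * f i) := by
        intro i j hij; have := hf hij; (try simp only); omega
      have m3' : StrictMono (fun i => 3 * f' i) := by
        intro i j hij; have := hf' hij; (try simp only); omega
      have mb := bump_mono f' hf' j
      have e1 : E (fun i => 3 * f i) (fun i => 3 * f' i) :=
        pat f f' _ _ hf hf' m3 m3' (by intro i j; (try simp only); omega)
          (by intro i j; (try simp only); omega) hE
      have e2 := hmj _ _ m3' mb (by intro i hi; simp [hi])
      refine mov_one pat rfl' sym tr _ _ m3 mb (tr _ _ _ e1 e2) k ?_
      intro i
      try simp only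
      split_ifs with h
      · omega
      · intro h'
        exact h (hf'.injective (by omega))
  intro f f' hf hf' hE hne
  rcases lt_or_gt_of_ne hne with h | h
  · exact main f f' hf hf' hE h
  · exact main f' f hf' hf (sym _ _ hE) h

theorem mov_many (rfl' : ∀ f, StrictMono f → E f f)
    (tr : ∀ f g h, E f g → E g h → E f h) (f : Fin n → ℕ)
    (hf : ∀ i j, i < j → f i + 2 ≤ f j) (S : Finset (Fin n)) (hS : ∀ i ∈ S, Mov E i) :
    E f (fun i => if i ∈ S then f i + 1 else f i) := by
  have hm : ∀ T : Finset (Fin n), StrictMono (fun i => if i ∈ T then f i + 1 else f i) := by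
    intro T i j hij
    have := hf i j hij
    try simp only
    split_ifs <;> omega
  induction S using Finset.induction_on with
  | empty =>
    simp only [Finset.notMem_empty, if_false]
    exact rfl' f (by intro i j hij; have := hf i j hij; omega)
  | insert a S ha ih =>
    refine tr _ _ _ (ih fun i hi => hS i (Finset.mem_insert_of_mem hi)) ?_
    refine hS a (Finset.mem_insert_self _ _) _ _ (hm S) (hm _) ?_
    intro i hi
    simp [hi]

end core

theorem rho_phi (φ : ℕ → ℕ) (hφ : StrictMono φ) (a b : ℕ) (hab : a ≤ b) :
    rho (Set.range φ) (φ a) (φ b) = b - a := by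
  unfold rho
  have h := hφ.monotone hab
  rw [min_eq_left h, max_eq_right h]
  have : Set.range φ ∩ Set.Ico (φ a) (φ b) = φ '' (Set.Ico a b) := by
    ext c
    constructor
    · rintro ⟨⟨d, rfl⟩, h1, h2⟩
      exact ⟨d, ⟨hφ.le_iff_le.1 h1, hφ.lt_iff_lt.1 h2⟩, rfl⟩
    · rintro ⟨d, ⟨h1, h2⟩, rfl⟩
      exact ⟨⟨d, rfl⟩, hφ.monotone h1, hφ h2⟩
  rw [this, Set.ncard_image_of_injective _ hφ.injective, ← Finset.coe_Ico, Set.ncard_coe_finset]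
  simp

/-- for every `x ∈ [X⁻]^n` with `d(x) ≥ m = n^{n·B·(B-1)}` there is an
`(n·B·(B-1))`-cascade `x_0, …, x_l` with `x_0 = x` and `x_0 ∩ x_l = {x_[i] : i ∈ I(Q)}`. -/
theorem stmt_12 (n : ℕ) (hn : 2 ≤ n) (P : Set (Set (Finset ℕ)))
    (hP : IsPartitionOn (cube n) P) (Q : Set (Finset ℕ)) (hQ : Q ∈ Atoms n P)
    (X : Set ℕ) (hX : X.Infinite)
    (hXQ : ∀ z : Finset ℕ, ↑z ⊆ X → z.card = 2 * n → z ∈ Q)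
    (e : ℕ) (he : e = sInf X)
    (m : ℕ) (hm : m = n ^ (n * Nat.choose (2 * n) n * (Nat.choose (2 * n) n - 1)))
    (x : Finset ℕ) (hx : ↑x ⊆ X \ {e}) (hxc : x.card = n)
    (hd : (m : ℕ∞) ≤ sparsity X e x) :
    ∃ (l : ℕ) (xs : ℕ → Finset ℕ), 1 ≤ l ∧ xs 0 = x ∧
      IsCascade n P Q X e (n * Nat.choose (2 * n) n * (Nat.choose (2 * n) n - 1)) l xs ∧
      (↑(xs 0 ∩ xs l) : Set ℕ) = nth x '' (IofQ n P Q) := by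
  classical
  obtain ⟨φ, hφ, rfl⟩ : ∃ φ : ℕ → ℕ, StrictMono φ ∧ Set.range φ = X :=
    ⟨Nat.nth (· ∈ X), Nat.nth_strictMono hX, Nat.range_nth_of_infinite hX⟩
  obtain ⟨_, S, hS, hQS⟩ := hQ
  -- `Q` is contained in or disjoint from every `Qpq`
  have hQcard : ∀ z ∈ Q, z.card = 2 * n := by
    intro z hz
    have hne : (Finset.range n) ∈ idx n := by
      refine Finset.mem_powersetCard.2 ⟨?_, by simp⟩
      intro a ha
      simp only [Finset.mem_range] at *
      omega
    rw [hQS] at hz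
    simp only [Set.mem_iInter] at hz
    have h1 := hz _ hne _ hne
    rcases hS _ hne _ hne with h | h
    · rw [h] at h1; exact h1.1
    · rw [h] at h1; exact h1.1
  have hatom : ∀ p ∈ idx n, ∀ q ∈ idx n, ∀ z ∈ Q, z ∈ Qpq n P p q → Q ⊆ Qpq n P p q := by
    intro p hp q hq z hz hzq z' hz'
    rw [hQS] at hz hz'
    simp only [Set.mem_iInter] at hz hz'
    have h1 := hz p hp q hq
    have h2 := hz' p hp q hq
    rcases hS p hp q hq with h | h
    · rw [h] at h2; exact h2
    · rw [h] at h1; exact absurd hzq h1.2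
  have pat : Pat (EE P φ (n := n)) := by
    intro f f' h h' hf hf' hh hh' h1 h2 hE
    refine pattern hφ ?_ f f' h h' hf hf' hh hh' h1 h2 hE
    intro p hp q hq z₁ z₂ s1 s2 c1 c2 hz
    exact hatom p hp q hq z₁ (hXQ _ s1 c1) hz (hXQ _ s2 c2)
  have reflP : ∀ u : Finset ℕ, u.card = n → EquivP P u u := by
    intro u hu
    have : u ∈ ⋃₀ P := by rw [hP.1]; exact hu
    obtain ⟨A, hA, huA⟩ := this
    exact ⟨A, hA, huA, huA⟩
  have rfl' : ∀ f : Fin n → ℕ, StrictMono f → EE P φ f f := by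
    intro f hf
    apply reflP
    rw [Finset.card_image_of_injective _ hφ.injective,
      Finset.card_image_of_injective _ hf.injective]
    simp
  have sym : ∀ f g : Fin n → ℕ, EE P φ f g → EE P φ g f := by
    rintro f g ⟨A, hA, h1, h2⟩
    exact ⟨A, hA, h2, h1⟩
  have tr : ∀ f g h : Fin n → ℕ, EE P φ f g → EE P φ g h → EE P φ f h := by
    rintro f g h ⟨A, hA, h1, h2⟩ ⟨B, hB, h3, h4⟩
    rcases hP.2 A hA B hB with h | h
    · exact absurd (show _ ∈ A ∩ B from ⟨h2, h3⟩) (by rw [h]; simp)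
    · subst h; exact ⟨A, hA, h1, h4⟩
  -- indices outside `I(Q)` are movable
  have hmov : ∀ k : Fin n, (k : ℕ) ∉ IofQ n P Q → Mov (EE P φ (n := n)) k := by
    intro k hk
    simp only [IofQ, Set.mem_iInter, not_forall] at hk
    obtain ⟨p, hp, q, hq, hpq, hne⟩ := hk
    have hne' : nth p k ≠ nth q k := fun h => hne ⟨k.2, h⟩
    obtain ⟨hps, hpc⟩ := Finset.mem_powersetCard.1 hp
    obtain ⟨hqs, hqc⟩ := Finset.mem_powersetCard.1 hq
    refine mov_two pat rfl' sym tr k (fun i => nth p i) (fun i => nth q i)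
      (nth_strictMono p n hpc) (nth_strictMono q n hqc) ?_ hne'
    have hzc : ((Finset.range (2 * n)).image φ).card = 2 * n := by
      rw [Finset.card_image_of_injective _ hφ.injective]; simp
    have hz := (hpq (hXQ ((Finset.range (2 * n)).image φ)
      (by intro a ha; simp at ha; obtain ⟨b, _, rfl⟩ := ha; exact ⟨_, rfl⟩) hzc)).2
    have hnth : ∀ i < 2 * n, nth ((Finset.range (2 * n)).image φ) i = φ i := by
      intro i hi
      have h1 := nth_of (fun i : Fin (2 * n) => φ i) (fun a b hab => hφ hab) ⟨i, hi⟩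
      have h2 : Finset.univ.image (fun i : Fin (2 * n) => φ i) =
          (Finset.range (2 * n)).image φ := by
        ext a
        simp only [Finset.mem_image, Finset.mem_univ, true_and, Finset.mem_range]
        constructor
        · rintro ⟨i, rfl⟩; exact ⟨i, i.2, rfl⟩
        · rintro ⟨i, hi, rfl⟩; exact ⟨⟨i, hi⟩, rfl⟩
      rw [h2] at h1; exact h1
    unfold EE
    rw [image_nth p n hpc, image_nth q n hqc]
    have e1 : ∀ p : Finset ℕ, p ⊆ Finset.range (2 * n) →
        p.image (nth ((Finset.range (2 * n)).image φ)) = p.image φ := by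
      intro p hp
      apply Finset.image_congr
      intro k hk
      exact hnth k (Finset.mem_range.1 (hp hk))
    rw [e1 p hps, e1 q hqs] at hz
    exact hz
  -- `I(Q)` is contained in `{0, ..., n-1}`
  have hIlt : ∀ k ∈ IofQ n P Q, k < n := by
    intro k hk
    have hne : (Finset.range n) ∈ idx n := by
      refine Finset.mem_powersetCard.2 ⟨?_, by simp⟩
      intro a ha
      simp only [Finset.mem_range] at *
      omega
    simp only [IofQ, Set.mem_iInter] at hk
    refine (hk _ hne _ hne ?_).1
    intro z hz
    refine ⟨hQcard z hz, reflP _ ?_⟩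
    rw [Finset.card_image_of_injOn]
    · simp
    · intro a ha b hb hab
      simp only [Finset.coe_range, Set.mem_Iio] at ha hb
      have := (nth_strictMono z _ (hQcard z hz)).injective (a₁ := ⟨a, by omega⟩)
        (a₂ := ⟨b, by omega⟩) hab
      simpa using this
  -- indices of the elements of `x`
  have hxm : ∀ i : Fin n, nth x i ∈ x := fun i => nth_mem x i (by rw [hxc]; exact i.2)
  have hex : ∀ i : Fin n, ∃ a, φ a = nth x i := fun i => (hx (hxm i)).1
  choose f hf using hex
  have hfm : StrictMono f := by
    intro i j hij
    rw [← hφ.lt_iff_lt, hf, hf]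
    exact nth_strictMono x n hxc hij
  set t := n * Nat.choose (2 * n) n * (Nat.choose (2 * n) n - 1) with ht
  have ht1 : t ≠ 0 := by
    have hB : 2 ≤ Nat.choose (2 * n) n := by
      have h2 := Nat.two_dvd_centralBinom_of_one_le (n := n) (by omega)
      rw [Nat.centralBinom] at h2
      exact Nat.le_of_dvd (Nat.choose_pos (by omega)) h2
    rw [ht]
    refine Nat.mul_ne_zero (Nat.mul_ne_zero (by omega) (by omega)) (by omega)
  have hm2 : 2 ≤ m := by
    rw [hm]
    exact hn.trans (Nat.le_self_pow ht1 n)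
  have hgap : ∀ i j, i < j → f i + 2 ≤ f j := by
    intro i j hij
    have hlt := hfm hij
    have h1 : sparsity (Set.range φ) e x ≤ (rho (Set.range φ) (nth x i) (nth x j) : ℕ∞) := by
      unfold sparsity
      refine (iInf₂_le (nth x i) (Finset.mem_union_left _ (hxm i))).trans ?_
      refine (iInf₂_le (nth x j) (Finset.mem_union_left _ (hxm j))).trans ?_
      refine iInf_le _ ?_
      exact (nth_strictMono x n hxc hij).ne
    have h2 := hd.trans h1
    rw [← hf, ← hf, rho_phi φ hφ _ _ hlt.le] at h2
    have h3 : m ≤ f j - f i := by exact_mod_cast h2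
    omega
  set T : Finset (Fin n) := Finset.univ.filter (fun i => (i : ℕ) ∉ IofQ n P Q) with hT
  set g : Fin n → ℕ := fun i => if i ∈ T then f i + 1 else f i with hg
  have hE : EE P φ f g := mov_many rfl' tr f hgap T (by
    intro i hi
    exact hmov i (by simpa [hT] using hi))
  have hgm : StrictMono g := by
    intro i j hij
    have := hgap i j hij
    simp only [hg]
    split_ifs <;> omega
  have hxim : (Finset.univ.image f).image φ = x := by
    rw [Finset.image_image]
    conv_rhs => rw [← image_nth x n hxc]
    apply Finset.image_congr
    intro i _
    exact hf i
  set y : Finset ℕ := (Finset.univ.image g).image φ with hy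
  have hyc : y.card = n := by
    rw [hy, Finset.card_image_of_injective _ hφ.injective,
      Finset.card_image_of_injective _ hgm.injective]
    simp
  have hymem : ∀ b, b ∈ y ↔ ∃ i, φ (g i) = b := by
    intro b; simp [hy]
  have hyX : (y : Set ℕ) ⊆ Set.range φ \ {e} := by
    intro b hb
    obtain ⟨i, rfl⟩ := (hymem b).1 hb
    refine ⟨⟨_, rfl⟩, ?_⟩
    simp only [Set.mem_singleton_iff]
    have hne : φ (f i) ≠ e := by
      have := (hx (hxm i)).2
      rw [← hf] at this
      simpa using this
    have hle : e ≤ φ (f i) := by rw [he]; exact Nat.sInf_le ⟨_, rfl⟩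
    have : φ (f i) ≤ φ (g i) := by
      apply hφ.monotone
      simp only [hg]; split_ifs <;> omega
    omega
  refine ⟨1, fun i => if i = 0 then x else y, le_rfl, by simp, ⟨?_, ?_⟩, ?_⟩
  · intro i _
    by_cases hi : i = 0
    · simp only [hi, if_true]; exact ⟨hx, hxc⟩
    · simp only [hi, if_false]; exact ⟨hyX, hyc⟩
  · intro i hi
    have hi0 : i = 0 := by omega
    subst hi0
    simp only [if_true, Nat.mul_zero, Nat.sub_zero]
    refine ⟨by rw [← hm]; exact hd, ?_, ?_⟩
    · refine le_trans ?_ (Nat.one_le_pow _ _ (by omega))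
      unfold rfun
      refine Finset.sup_le ?_
      intro b hb
      simp only [Nat.zero_add, one_ne_zero, if_false] at hb
      obtain ⟨i, rfl⟩ := (hymem b).1 hb
      have hfg : f i ≤ g i := by simp only [hg]; split_ifs <;> omega
      refine le_trans (Nat.sInf_le ⟨φ (f i), ⟨?_, hφ.monotone hfg⟩, rfl⟩) ?_
      · rw [hf]; exact Finset.mem_union_left _ (hxm i)
      · try simp only
        rw [rho_phi φ hφ _ _ hfg]
        simp only [hg]; split_ifs <;> omega
    · simp only [Nat.zero_add, one_ne_zero, if_false]
      have hsub : ((x ∪ y : Finset ℕ) : Set ℕ) ⊆ Set.range φ := by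
        intro a ha
        simp only [Finset.coe_union, Set.mem_union] at ha
        rcases ha with ha | ha
        · exact (hx ha).1
        · exact (hyX ha).1
      have hcle : (x ∪ y).card ≤ 2 * n := by
        have := Finset.card_union_le x y
        omega
      obtain ⟨z, hz1, hz2, hz3⟩ : ∃ z : Finset ℕ, x ∪ y ⊆ z ∧ (z : Set ℕ) ⊆ Set.range φ ∧
          z.card = 2 * n := by
        have hw2 : (Finset.univ.image f ∪ Finset.univ.image g).card ≤ 2 * n := by
          rw [← Finset.card_image_of_injective _ hφ.injective, Finset.image_union, hxim]
          exact hcle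
        obtain ⟨w', _, h1, h2, _, _⟩ := extend_mono _ id (strictMono_id.strictMonoOn _) _ hw2
        refine ⟨w'.image φ, ?_, ?_, ?_⟩
        · rw [hy, ← hxim, ← Finset.image_union]
          exact Finset.image_subset_image h1
        · intro a ha; simp at ha; obtain ⟨b, _, rfl⟩ := ha; exact ⟨_, rfl⟩
        · rw [Finset.card_image_of_injective _ hφ.injective, h2]
      obtain ⟨p, hp, hpi⟩ := exists_pos n x z (Finset.subset_union_left.trans hz1) hxc hz3
      obtain ⟨q, hq, hqi⟩ := exists_pos n y z (Finset.subset_union_right.trans hz1) hyc hz3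
      refine ⟨p, hp, q, hq, ?_, z, hz2, hz3, hpi, hqi⟩
      refine hatom p hp q hq z (hXQ z hz2 hz3) ⟨hz3, ?_⟩
      rw [hpi, hqi]
      unfold EE at hE
      rw [hxim] at hE
      exact hE
  · ext a
    simp only [if_true, one_ne_zero, if_false, Finset.coe_inter, Set.mem_inter_iff,
      Finset.mem_coe, Set.mem_image]
    constructor
    · rintro ⟨ha, hay⟩
      obtain ⟨i, rfl⟩ := (hymem a).1 hay
      by_cases hi : (i : ℕ) ∈ IofQ n P Q
      · refine ⟨i, hi, ?_⟩
        rw [← hf]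
        simp [hg, hT, hi]
      · exfalso
        rw [← image_nth x n hxc] at ha
        obtain ⟨j, _, hj⟩ := Finset.mem_image.1 ha
        have hj' : φ (f j) = φ (g i) := by rw [hf]; exact hj
        have h1 := hφ.injective hj'
        have h2 : g i = f i + 1 := by simp [hg, hT, hi]
        rcases lt_trichotomy i j with h | h | h
        · have := hgap i j h; omega
        · subst h; omega
        · have := hgap j i h; omega
    · rintro ⟨k, hk, rfl⟩
      have hkn := hIlt k hk
      refine ⟨hxm ⟨k, hkn⟩, (hymem _).2 ⟨⟨k, hkn⟩, ?_⟩⟩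
      have : g ⟨k, hkn⟩ = f ⟨k, hkn⟩ := by simp [hg, hT, hk]
      rw [this, hf]
end

section
/- Let n ≥ 1, let X ⊆ ℕ be infinite with e = min X, let p, q ∈ [2n]^n, let x, y ∈ [X⁻]^n with x →_{pq} y, let i < n with x_[i] ∉ y, and let a = max(x_[i] ∩ (x ∪ y)⁺) be the largest element of (x ∪ y) ∪ {e} strictly below x_[i]. Then for every x' ∈ X with a < x' ≤ x_[i] and ρ(a, x') ≥ 2n, one has (x ∖ {x_[i]}) ∪ {x'} →_{pq} y. -/
theorem nth_eq_emb_s13 (s : Finset ℕ) (m : ℕ) (h : s.card = m) (i : ℕ) (hi : i < m) :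
    nth s i = s.orderEmbOfFin h ⟨i, hi⟩ := by
  have hl : i < (s.sort (· ≤ ·)).length := by simp [h, hi]
  rw [Finset.orderEmbOfFin_apply]
  exact List.getD_eq_getElem _ _ hl

theorem nth_mem_s13 (s : Finset ℕ) (i : ℕ) (hi : i < s.card) : nth s i ∈ s := by
  rw [nth_eq_emb_s13 s _ rfl i hi]
  exact Finset.orderEmbOfFin_mem _ _ _

theorem nth_lt (s : Finset ℕ) (i j : ℕ) (hij : i < j) (hj : j < s.card) : nth s i < nth s j := by
  rw [nth_eq_emb_s13 s _ rfl i (hij.trans hj), nth_eq_emb_s13 s _ rfl j hj]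
  exact (s.orderEmbOfFin rfl).strictMono hij

theorem nth_image (g : ℕ → ℕ) (m : ℕ) (hg : ∀ i j, i < j → j < m → g i < g j) :
    ((Finset.range m).image g).card = m ∧
      ∀ i < m, nth ((Finset.range m).image g) i = g i := by
  have hc : ((Finset.range m).image g).card = m := by
    rw [Finset.card_image_of_injOn, Finset.card_range]
    intro i hi j hj hij
    simp only [Finset.coe_range, Set.mem_Iio] at hi hj
    rcases lt_trichotomy i j with h | h | h
    · have := hg i j h hj; omega
    · exact h
    · have := hg j i h hi; omega
  refine ⟨hc, fun i hi => ?_⟩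
  rw [nth_eq_emb_s13 _ m hc i hi]
  have := Finset.orderEmbOfFin_unique (s := (Finset.range m).image g) hc
    (f := fun t : Fin m => g t)
    (fun t => Finset.mem_image_of_mem _ (Finset.mem_range.2 t.2))
    (fun s t hst => hg s t hst t.2)
  exact (congrFun this ⟨i, hi⟩).symm

/-- let `x →_{pq} y` with `x, y ∈ [X⁻]^n`, `i < n`, `x_[i] ∉ y`, and let
`a = max(x_[i] ∩ (x ∪ y)⁺)` be the largest element of `(x ∪ y) ∪ {e}` strictly below
`x_[i]`. Then for every `x' ∈ X` with `a < x' ≤ x_[i]` and `ρ(a, x') ≥ 2n`: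
`(x ∖ {x_[i]}) ∪ {x'} →_{pq} y`. -/
theorem stmt_13 (n : ℕ) (hn : 1 ≤ n) (X : Set ℕ) (hX : X.Infinite) (e : ℕ) (he : e = sInf X)
    (p q : Finset ℕ) (hp : p ∈ idx n) (hq : q ∈ idx n)
    (x y : Finset ℕ) (hx : ↑x ⊆ X \ {e}) (hxc : x.card = n)
    (hy : ↑y ⊆ X \ {e}) (hyc : y.card = n)
    (harr : Arrow X n p q x y) (i : ℕ) (hi : i < n) (hni : nth x i ∉ y)
    (a : ℕ) (haMem : a ∈ x ∪ y ∪ ({e} : Finset ℕ)) (haLt : a < nth x i)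
    (haMax : ∀ b ∈ x ∪ y ∪ ({e} : Finset ℕ), b < nth x i → b ≤ a)
    (x' : ℕ) (hx' : x' ∈ X) (h1 : a < x') (h2 : x' ≤ nth x i) (h3 : 2 * n ≤ rho X a x') :
    Arrow X n p q (x.erase (nth x i) ∪ {x'}) y := by
  obtain ⟨z, hzX, hzc, hpx, hqy⟩ := harr
  have hxi : nth x i ∈ x := nth_mem_s13 x i (by omega)
  generalize nth x i = w at *
  obtain ⟨k, hkp, hkw⟩ : ∃ k ∈ p, nth z k = w := by
    rw [← hpx] at hxi; simpa using hxi
  have hpr : ∀ m ∈ p, m < 2 * n := fun m hm =>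
    Finset.mem_range.1 ((Finset.mem_powersetCard.1 hp).1 hm)
  have hqr : ∀ m ∈ q, m < 2 * n := fun m hm =>
    Finset.mem_range.1 ((Finset.mem_powersetCard.1 hq).1 hm)
  have hk : k < 2 * n := hpr k hkp
  have hpz : ∀ m ∈ p, nth z m ∈ x := fun m hm => hpx ▸ Finset.mem_image_of_mem _ hm
  have hqz : ∀ m ∈ q, nth z m ∈ y := fun m hm => hqy ▸ Finset.mem_image_of_mem _ hm
  have hkq : k ∉ q := fun h => hni (hkw ▸ hqz k h)
  have hzlt : ∀ i j, i < j → j < 2 * n → nth z i < nth z j := fun i j h h' =>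
    nth_lt z i j h (by omega)
  -- the filler set
  have hfin : (X ∩ Set.Ioo a x').Finite := (Set.finite_Ioo a x').inter_of_right X
  obtain ⟨B, hB⟩ : ∃ B : Finset ℕ, (B : Set ℕ) = X ∩ Set.Ioo a x' :=
    ⟨hfin.toFinset, by simp⟩
  have hBc : 2 * n ≤ B.card + 1 := by
    refine h3.trans ?_
    unfold rho
    rw [min_eq_left h1.le, max_eq_right h1.le]
    refine le_trans (Set.ncard_le_ncard (t := ((insert a B : Finset ℕ) : Set ℕ)) ?_
      (Finset.finite_toSet _)) ?_
    · rintro t ⟨ht, ht1, ht2⟩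
      rw [Finset.coe_insert, hB]
      rcases eq_or_lt_of_le ht1 with h | h
      · exact Or.inl h.symm
      · exact Or.inr ⟨ht, h, ht2⟩
    · rw [Set.ncard_coe_finset]
      exact Finset.card_insert_le _ _
  have hBm : ∀ m < k, nth B m ∈ X ∧ a < nth B m ∧ nth B m < x' := by
    intro m hm
    have : nth B m ∈ (B : Set ℕ) := nth_mem_s13 B m (by omega)
    rw [hB] at this
    exact ⟨this.1, this.2.1, this.2.2⟩
  have hBlt : ∀ i j, i < j → j < k → nth B i < nth B j := fun i j h h' =>
    nth_lt B i j h (by omega)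
  let g : ℕ → ℕ := fun m =>
    if m = k then x' else if m < k ∧ a < nth z m then nth B m else nth z m
  have hgk : g k = x' := by simp [g]
  have hg1 : ∀ m, m < k → a < nth z m → g m = nth B m := by
    intro m h h'; simp [g, h, h', h.ne]
  have hg2 : ∀ m, m < k → nth z m ≤ a → g m = nth z m := by
    intro m h h'; simp [g, h.ne, not_lt.2 h']
  have hg3 : ∀ m, k < m → g m = nth z m := by
    intro m h; simp [g, h.ne', not_lt.2 h.le]
  have hmono : ∀ i j, i < j → j < 2 * n → g i < g j := by
    intro s t hst ht
    have hz := hzlt s t hst ht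
    rcases lt_trichotomy t k with htk | rfl | htk
    · have hsk := hst.trans htk
      have := hBm t htk
      rcases lt_or_ge a (nth z t) with h | h <;> rcases lt_or_ge a (nth z s) with h' | h'
      · rw [hg1 t htk h, hg1 s hsk h']; exact hBlt s t hst htk
      · rw [hg1 t htk h, hg2 s hsk h']; omega
      · omega
      · rw [hg2 t htk h, hg2 s hsk h']; omega
    · rw [hgk]
      have := hBm s hst
      rcases lt_or_ge a (nth z s) with h' | h'
      · rw [hg1 s hst h']; omega
      · rw [hg2 s hst h']; omega
    · rw [hg3 t htk]
      have hkt := hzlt k t htk ht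
      rcases lt_trichotomy s k with hsk | rfl | hsk
      · have := hBm s hsk
        rcases lt_or_ge a (nth z s) with h' | h'
        · rw [hg1 s hsk h']; omega
        · rw [hg2 s hsk h']; omega
      · rw [hgk]; omega
      · rw [hg3 s hsk]; omega
  have hgX : ∀ m < 2 * n, g m ∈ X := by
    intro m hm
    have hzm : nth z m ∈ X := hzX (nth_mem_s13 z m (by omega))
    rcases lt_trichotomy m k with h | rfl | h
    · rcases lt_or_ge a (nth z m) with h' | h'
      · rw [hg1 m h h']; exact (hBm m h).1
      · rw [hg2 m h h']; exact hzm
    · rwa [hgk]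
    · rwa [hg3 m h]
  have hgxy : ∀ m < 2 * n, m ≠ k → nth z m ∈ x ∪ y → g m = nth z m := by
    intro m hm hmk hxy
    rcases lt_or_gt_of_ne hmk with h | h
    · refine hg2 m h (haMax _ (Finset.mem_union_left _ hxy) ?_)
      have := hzlt m k h hk
      omega
    · exact hg3 m h
  obtain ⟨hc, hnth⟩ := nth_image g (2 * n) hmono
  refine ⟨(Finset.range (2 * n)).image g, ?_, hc, ?_, ?_⟩
  · intro t ht
    simp only [Finset.coe_image, Set.mem_image, Finset.coe_range, Set.mem_Iio] at ht
    obtain ⟨m, hm, rfl⟩ := ht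
    exact hgX m hm
  · rw [Finset.image_congr (g := g) (fun m hm => hnth m (hpr m hm))]
    have hgp : ∀ m ∈ p, m ≠ k → g m = nth z m := fun m hm hmk =>
      hgxy m (hpr m hm) hmk (Finset.mem_union_left _ (hpz m hm))
    ext t
    simp only [Finset.mem_image, Finset.mem_union, Finset.mem_erase, Finset.mem_singleton]
    constructor
    · rintro ⟨m, hm, rfl⟩
      by_cases hmk : m = k
      · right; rw [hmk, hgk]
      · left
        rw [hgp m hm hmk]
        refine ⟨?_, hpz m hm⟩
        rcases lt_or_gt_of_ne hmk with h | h
        · have := hzlt m k h hk; omega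
        · have := hzlt k m h (hpr m hm); omega
    · rintro (⟨htw, htx⟩ | rfl)
      · rw [← hpx, Finset.mem_image] at htx
        obtain ⟨m, hm, rfl⟩ := htx
        exact ⟨m, hm, hgp m hm (fun h => htw (h ▸ hkw))⟩
      · exact ⟨k, hkp, hgk⟩
  · rw [← hqy]
    refine Finset.image_congr (fun m hm => ?_)
    have hm' : m ∈ q := hm
    rw [hnth m (hqr m hm')]
    exact hgxy m (hqr m hm') (fun h => hkq (h ▸ hm'))
      (Finset.mem_union_right _ (hqz m hm'))
end

section
/- Let n ≥ 2, let P be a partition of [ω]^n, let Q ∈ P*, let X ⊆ ℕ be infinite with [X]^{2n} ⊆ Q and e = min X, and let m = n^{n·B·(B−1)} where B = binomial(2n,n). Let x ∈ [X⁻]^n, let i < n with i ∉ I(Q), let x' ∈ X, and set y = (x ∖ {x_[i]}) ∪ {x'}. Suppose min(d(x), d(y)) ≥ m and either (i ≥ 1 and x_[i−1] < x' ≤ x_[i]) or (i = 0 and e < x' ≤ x_[0]). Then x ↔_Q y. -/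
theorem sort_image_aux {α : Type} [LinearOrder α] (T : Finset α) (g : α → ℕ)
    (hg : StrictMonoOn g (T : Set α)) :
    (T.image g).sort (· ≤ ·) = (T.sort (· ≤ ·)).map g := by
  have hinj : Set.InjOn g (T : Set α) := hg.injOn
  have hp : ((T.image g).sort (· ≤ ·)).Perm ((T.sort (· ≤ ·)).map g) := by
    rw [List.perm_ext_iff_of_nodup (Finset.sort_nodup _ _)]
    · intro a; simp
    · refine List.Nodup.map_on ?_ (Finset.sort_nodup _ _)
      intro a ha b hb h
      exact hinj (by simpa using ha) (by simpa using hb) h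
  refine hp.eq_of_pairwise (le := (· ≤ ·)) (fun a b _ _ h1 h2 => le_antisymm h1 h2)
    (Finset.pairwise_sort _ _) ?_
  rw [List.pairwise_map]
  refine (Finset.pairwise_sort T (· ≤ ·)).imp_of_mem ?_
  intro a b ha hb h
  exact hg.monotoneOn (by simpa using ha) (by simpa using hb) h

theorem exists_idx_aux {α : Type} [LinearOrder α] (n : ℕ) (T a : Finset α)
    (hT : T.card = 2 * n) (haT : a ⊆ T) (hac : a.card = n) :
    ∃ p ∈ idx n, ∀ g : α → ℕ, StrictMonoOn g (T : Set α) →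
      p.image (nth (T.image g)) = a.image g := by
  classical
  set L := T.sort (· ≤ ·) with hL
  have hlen : L.length = 2 * n := by simp [hL, hT]
  have hnd : L.Nodup := Finset.sort_nodup _ _
  refine ⟨a.image (fun s => L.idxOf s), ?_, ?_⟩
  · rw [idx, Finset.mem_powersetCard]
    constructor
    · intro k hk
      obtain ⟨s, hs, rfl⟩ := Finset.mem_image.1 hk
      rw [Finset.mem_range, ← hlen, List.idxOf_lt_length_iff]
      simpa [hL] using haT hs
    · rw [Finset.card_image_of_injOn, hac]
      intro s hs t ht h
      have hs' : s ∈ L := by simpa [hL] using haT hs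
      exact (List.idxOf_inj hs').1 h
  · intro g hg
    rw [Finset.image_image]
    apply Finset.image_congr
    intro s hs
    have hs' : s ∈ L := by simpa [hL] using haT hs
    have hlt : L.idxOf s < L.length := List.idxOf_lt_length_iff.2 hs'
    simp only [Function.comp, nth]
    rw [sort_image_aux T g hg, List.getD_eq_getElem _ _ (by rw [List.length_map]; exact hlt)]
    rw [List.getElem_map]
    congr 1
    exact List.getElem_idxOf hlt

theorem atom_sub_aux (n : ℕ) (P : Set (Set (Finset ℕ))) (Q : Set (Finset ℕ)) (hQ : Q ∈ Atoms n P)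
    (p q : Finset ℕ) (hp : p ∈ idx n) (hq : q ∈ idx n) (z : Finset ℕ) (hz : z ∈ Q)
    (hzq : z ∈ Qpq n P p q) : Q ⊆ Qpq n P p q := by
  obtain ⟨_, S, hS, rfl⟩ := hQ
  have key : ∀ w, w ∈ (⋂ p ∈ idx n, ⋂ q ∈ idx n, S p q) → w ∈ S p q := by
    intro w hw
    simp only [Set.mem_iInter] at hw
    exact hw p hp q hq
  rcases hS p hp q hq with h | h
  · intro w hw
    rw [← h]; exact key w hw
  · have := key z hz
    rw [h] at this
    exact absurd hzq this.2

/-- order-type invariance, base case -/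
theorem inv_base_aux (n : ℕ) (P : Set (Set (Finset ℕ))) (Q : Set (Finset ℕ)) (hQ : Q ∈ Atoms n P)
    (X : Set ℕ) (hXQ : ∀ z : Finset ℕ, ↑z ⊆ X → z.card = 2 * n → z ∈ Q)
    (T a b : Finset ℚ) (hT : T.card = 2 * n) (ha : a ⊆ T) (hb : b ⊆ T)
    (hac : a.card = n) (hbc : b.card = n) (g h : ℚ → ℕ)
    (hg : StrictMonoOn g (T : Set ℚ)) (hh : StrictMonoOn h (T : Set ℚ))
    (hgX : ∀ s ∈ T, g s ∈ X) (hhX : ∀ s ∈ T, h s ∈ X)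
    (H : EquivP P (a.image g) (b.image g)) : EquivP P (a.image h) (b.image h) := by
  obtain ⟨p, hp, hp'⟩ := exists_idx_aux n T a hT ha hac
  obtain ⟨q, hq, hq'⟩ := exists_idx_aux n T b hT hb hbc
  have hz : ∀ g : ℚ → ℕ, StrictMonoOn g (T : Set ℚ) → (∀ s ∈ T, g s ∈ X) → T.image g ∈ Q ∧
      (T.image g).card = 2 * n := by
    intro g hg hgX
    have hc : (T.image g).card = 2 * n := by
      rw [Finset.card_image_of_injOn hg.injOn, hT]
    refine ⟨hXQ _ ?_ hc, hc⟩
    intro k hk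
    obtain ⟨s, hs, rfl⟩ := Finset.mem_image.1 (Finset.mem_coe.1 hk)
    exact hgX s hs
  have hsub : Q ⊆ Qpq n P p q := by
    refine atom_sub_aux n P Q hQ p q hp hq _ (hz g hg hgX).1 ⟨(hz g hg hgX).2, ?_⟩
    rw [hp' g hg, hq' g hg]; exact H
  have := (hsub (hz h hh hhX).1).2
  rwa [hp' h hh, hq' h hh] at this

theorem ext_one_aux (X : Set ℕ) (hX : X.Infinite) (S : Finset ℚ) (t : ℚ) (ht : ∀ s ∈ S, s < t)
    (g : ℚ → ℕ) (hg : StrictMonoOn g (S : Set ℚ)) (hgX : ∀ s ∈ S, g s ∈ X) :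
    ∃ g' : ℚ → ℕ, StrictMonoOn g' ((insert t S : Finset ℚ) : Set ℚ) ∧
      (∀ s ∈ insert t S, g' s ∈ X) ∧ ∀ s ∈ S, g' s = g s := by
  obtain ⟨v, hv, hv'⟩ := hX.exists_gt (S.sup g)
  have hne : ∀ s ∈ S, s ≠ t := fun s hs => (ht s hs).ne
  have hS : ∀ s ∈ S, Function.update g t v s = g s := fun s hs => by
    rw [Function.update_of_ne (hne s hs)]
  refine ⟨Function.update g t v, ?_, ?_, hS⟩
  · intro s hs u hu hsu
    simp only [Finset.coe_insert, Set.mem_insert_iff, Finset.mem_coe] at hs hu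
    rcases hs with rfl | hs
    · rcases hu with rfl | hu
      · exact absurd hsu (lt_irrefl _)
      · exact absurd hsu (ht u hu).not_gt
    · rw [hS s hs]
      rcases hu with rfl | hu
      · rw [Function.update_self]
        exact lt_of_le_of_lt (Finset.le_sup (f := g) hs) hv'
      · rw [hS u hu]; exact hg hs hu hsu
  · intro s hs
    rcases Finset.mem_insert.1 hs with rfl | hs
    · rwa [Function.update_self]
    · rw [hS s hs]; exact hgX s hs

theorem exists_top_aux (S : Finset ℚ) : ∃ t : ℚ, ∀ s ∈ S, s < t := by
  obtain ⟨M, hM⟩ := S.bddAbove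
  exact ⟨M + 1, fun s hs => by have := hM (Finset.mem_coe.2 hs); linarith⟩

theorem exists_map_aux (X : Set ℕ) (hX : X.Infinite) (S : Finset ℚ) :
    ∃ g : ℚ → ℕ, StrictMonoOn g (S : Set ℚ) ∧ ∀ s ∈ S, g s ∈ X := by
  induction S using Finset.induction_on_max with
  | empty => exact ⟨fun _ => 0, by simp [StrictMonoOn], by simp⟩
  | insert t S ht ih =>
    obtain ⟨g, hg, hgX⟩ := ih
    obtain ⟨g', h1, h2, _⟩ := ext_one_aux X hX S t ht g hg hgX
    exact ⟨g', h1, h2⟩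

theorem inv_aux (n : ℕ) (P : Set (Set (Finset ℕ))) (Q : Set (Finset ℕ)) (hQ : Q ∈ Atoms n P)
    (X : Set ℕ) (hX : X.Infinite) (hXQ : ∀ z : Finset ℕ, ↑z ⊆ X → z.card = 2 * n → z ∈ Q)
    (a b : Finset ℚ) (hac : a.card = n) (hbc : b.card = n) (k : ℕ) :
    ∀ (T : Finset ℚ), T.card + k = 2 * n → a ⊆ T → b ⊆ T → ∀ g h : ℚ → ℕ,
    StrictMonoOn g (T : Set ℚ) → StrictMonoOn h (T : Set ℚ) →
    (∀ s ∈ T, g s ∈ X) → (∀ s ∈ T, h s ∈ X) →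
    EquivP P (a.image g) (b.image g) → EquivP P (a.image h) (b.image h) := by
  induction k with
  | zero =>
    intro T hT ha hb g h hg hh hgX hhX H
    exact inv_base_aux n P Q hQ X hXQ T a b hT ha hb hac hbc g h hg hh hgX hhX H
  | succ k ih =>
    intro T hT ha hb g h hg hh hgX hhX H
    obtain ⟨t, ht⟩ := exists_top_aux T
    have htT : t ∉ T := fun h => lt_irrefl _ (ht t h)
    obtain ⟨g', g1, g2, g3⟩ := ext_one_aux X hX T t ht g hg hgX
    obtain ⟨h', h1, h2, h3⟩ := ext_one_aux X hX T t ht h hh hhX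
    have im : ∀ (c : Finset ℚ), c ⊆ T → ∀ f f' : ℚ → ℕ, (∀ s ∈ T, f' s = f s) →
        c.image f' = c.image f := by
      intro c hc f f' hf
      exact Finset.image_congr fun s hs => hf s (hc hs)
    have := ih (insert t T) (by rw [Finset.card_insert_of_notMem htT]; omega)
      (ha.trans (Finset.subset_insert _ _)) (hb.trans (Finset.subset_insert _ _)) g' h' g1 h1 g2 h2
    rw [im a ha g g' g3, im b hb g g' g3, im a ha h h' h3, im b hb h h' h3] at this
    exact this H

/-- transferred equivalence on finite sets of rationals -/
def RatEq (P : Set (Set (Finset ℕ))) (X : Set ℕ) (a b : Finset ℚ) : Prop :=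
  ∀ g : ℚ → ℕ, StrictMonoOn g ((a ∪ b : Finset ℚ) : Set ℚ) → (∀ s ∈ a ∪ b, g s ∈ X) →
    EquivP P (a.image g) (b.image g)

theorem RatEq.of_exists (n : ℕ) (P : Set (Set (Finset ℕ))) (Q : Set (Finset ℕ))
    (hQ : Q ∈ Atoms n P)
    (X : Set ℕ) (hX : X.Infinite) (hXQ : ∀ z : Finset ℕ, ↑z ⊆ X → z.card = 2 * n → z ∈ Q)
    (a b : Finset ℚ) (hac : a.card = n) (hbc : b.card = n) (g : ℚ → ℕ)
    (hg : StrictMonoOn g ((a ∪ b : Finset ℚ) : Set ℚ)) (hgX : ∀ s ∈ a ∪ b, g s ∈ X)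
    (H : EquivP P (a.image g) (b.image g)) : RatEq P X a b := by
  intro h hh hhX
  have hc := Finset.card_union_le a b
  exact inv_aux n P Q hQ X hX hXQ a b hac hbc (2 * n - (a ∪ b).card) (a ∪ b) (by omega)
    Finset.subset_union_left Finset.subset_union_right g h hg hh hgX hhX H

theorem RatEq.symm {P : Set (Set (Finset ℕ))} {X : Set ℕ} {a b : Finset ℚ} (h : RatEq P X a b) :
    RatEq P X b a := by
  intro g hg hgX
  rw [Finset.union_comm] at hg hgX
  obtain ⟨A, h1, h2, h3⟩ := h g hg hgX
  exact ⟨A, h1, h3, h2⟩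

theorem RatEq.trans (n : ℕ) (P : Set (Set (Finset ℕ))) (hP : IsPartitionOn (cube n) P)
    (Q : Set (Finset ℕ)) (hQ : Q ∈ Atoms n P)
    (X : Set ℕ) (hX : X.Infinite) (hXQ : ∀ z : Finset ℕ, ↑z ⊆ X → z.card = 2 * n → z ∈ Q)
    (a b c : Finset ℚ) (hac : a.card = n) (hcc : c.card = n)
    (h1 : RatEq P X a b) (h2 : RatEq P X b c) : RatEq P X a c := by
  obtain ⟨g, hg, hgX⟩ := exists_map_aux X hX (a ∪ b ∪ c)
  have s1 : a ∪ b ⊆ a ∪ b ∪ c := Finset.subset_union_left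
  have s2 : b ∪ c ⊆ a ∪ b ∪ c := by intro s; simp; tauto
  have s3 : a ∪ c ⊆ a ∪ b ∪ c := by intro s; simp; tauto
  refine RatEq.of_exists n P Q hQ X hX hXQ a c hac hcc g (hg.mono (by exact_mod_cast s3))
    (fun s hs => hgX s (s3 hs)) ?_
  obtain ⟨A, hA, a1, a2⟩ := h1 g (hg.mono (by exact_mod_cast s1)) (fun s hs => hgX s (s1 hs))
  obtain ⟨B, hB, b1, b2⟩ := h2 g (hg.mono (by exact_mod_cast s2)) (fun s hs => hgX s (s2 hs))
  rcases hP.2 A hA B hB with h | h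
  · have : b.image g ∈ A ∩ B := ⟨a2, b1⟩
    rw [h] at this
    exact absurd this (Set.notMem_empty _)
  · subst h
    exact ⟨A, hA, a1, b2⟩

theorem RatEq.map {P : Set (Set (Finset ℕ))} {X : Set ℕ} {a b : Finset ℚ} (h : RatEq P X a b)
    (φ : ℚ ≃o ℚ) : RatEq P X (a.image φ) (b.image φ) := by
  intro g hg hgX
  rw [← Finset.image_union] at hg hgX
  have := h (g ∘ φ) (fun s hs t ht hst => hg (by simpa using hs) (by simpa using ht)
    (φ.strictMono hst)) (fun s hs => hgX _ (Finset.mem_image_of_mem _ hs))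
  rwa [Finset.image_image, Finset.image_image]

/-- scaling of the half line above `c` -/
theorem scale_aux (c u v : ℚ) (hu : c < u) (hv : c < v) :
    ∃ ψ : ℚ ≃o ℚ, (∀ s ≤ c, ψ s = s) ∧ ψ u = v := by
  have key : ∀ r : ℚ, 0 < r → StrictMono (fun s : ℚ => if s ≤ c then s else c + (s - c) * r) := by
    intro r hr s t hst
    dsimp only
    split_ifs with h1 h2 h2
    · exact hst
    · have : 0 < (t - c) * r := mul_pos (by linarith) hr
      linarith
    · linarith
    · have : (s - c) * r < (t - c) * r := mul_lt_mul_of_pos_right (by linarith) hr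
      linarith
  set r : ℚ := (v - c) / (u - c) with hrdef
  have hr : 0 < r := div_pos (by linarith) (by linarith)
  have inv : ∀ r : ℚ, 0 < r → ∀ s : ℚ,
      (fun s : ℚ => if s ≤ c then s else c + (s - c) * r⁻¹)
      ((fun s : ℚ => if s ≤ c then s else c + (s - c) * r) s) = s := by
    intro r hr s
    dsimp only
    by_cases h1 : s ≤ c
    · simp [h1]
    · have : 0 < (s - c) * r := mul_pos (by linarith) hr
      rw [if_neg h1, if_neg (by linarith)]
      field_simp
      ring
  let E : ℚ ≃ ℚ :=
    { toFun := fun s : ℚ => if s ≤ c then s else c + (s - c) * r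
      invFun := fun s : ℚ => if s ≤ c then s else c + (s - c) * r⁻¹
      left_inv := inv r hr
      right_inv := by
        have := inv r⁻¹ (inv_pos.2 hr)
        rw [inv_inv] at this
        exact this }
  refine ⟨⟨E, fun {a b} => (key r hr).le_iff_le⟩, ?_, ?_⟩
  · intro s hs
    change (if s ≤ c then s else c + (s - c) * r) = s
    rw [if_pos hs]
  · change (if u ≤ c then u else c + (u - c) * r) = v
    have : u - c ≠ 0 := by linarith
    rw [if_neg (by linarith), hrdef]
    field_simp
    ring

theorem extend_aux (S : Finset ℚ) (f : ℚ → ℚ) : StrictMonoOn f (S : Set ℚ) →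
    ∃ φ : ℚ ≃o ℚ, ∀ s ∈ S, φ s = f s := by
  induction S using Finset.induction_on_max with
  | empty => intro _; exact ⟨OrderIso.refl _, by simp⟩
  | insert t S ht ih =>
    intro hf
    obtain ⟨φ, hφ⟩ := ih (hf.mono (by simp))
    rcases S.eq_empty_or_nonempty with rfl | hne
    · refine ⟨OrderIso.addRight (f t - t), ?_⟩
      intro s hs
      have : s = t := by simpa using hs
      subst this
      simp
    · have hmS := S.max'_mem hne
      set w := S.max' hne with hw
      have h1 : f w < φ t := by
        rw [← hφ w hmS]; exact φ.strictMono (ht w hmS)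
      have h2 : f w < f t := hf (by simp [hmS]) (by simp) (ht w hmS)
      obtain ⟨ψ, p1, p2⟩ := scale_aux (f w) (φ t) (f t) h1 h2
      refine ⟨φ.trans ψ, ?_⟩
      intro s hs
      rcases Finset.mem_insert.1 hs with rfl | hs
      · simpa using p2
      · rw [OrderIso.trans_apply, hφ s hs, p1]
        exact hf.monotoneOn (by simp [hs]) (by simp [hmS]) (S.le_max' s hs)

theorem move_aux (S : Finset ℚ) (t t' : ℚ)
    (h : ∀ s ∈ S, (s < t ∧ s < t') ∨ (t < s ∧ t' < s)) :
    ∃ φ : ℚ ≃o ℚ, (∀ s ∈ S, φ s = s) ∧ φ t = t' := by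
  have hne : ∀ s ∈ S, s ≠ t := by
    intro s hs; rcases h s hs with h | h
    · exact h.1.ne
    · exact h.1.ne'
  obtain ⟨φ, hφ⟩ := extend_aux (insert t S) (Function.update id t t') (by
    intro s hs u hu hsu
    simp only [Finset.coe_insert, Set.mem_insert_iff, Finset.mem_coe] at hs hu
    rcases hs with rfl | hs
    · rcases hu with rfl | hu
      · exact absurd hsu (lt_irrefl _)
      · rw [Function.update_self, Function.update_of_ne (hne u hu)]
        rcases h u hu with h | h
        · exact absurd hsu h.1.not_gt
        · exact h.2
    · rw [Function.update_of_ne (hne s hs)]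
      rcases hu with rfl | hu
      · rw [Function.update_self]
        rcases h s hs with h | h
        · exact h.2
        · exact absurd hsu h.1.not_gt
      · rw [Function.update_of_ne (hne u hu)]; exact hsu)
  refine ⟨φ, fun s hs => ?_, ?_⟩
  · rw [hφ s (Finset.mem_insert_of_mem hs), Function.update_of_ne (hne s hs)]; rfl
  · rw [hφ t (Finset.mem_insert_self _ _), Function.update_self]

theorem tuple_aux {n : ℕ} (u v : Fin n → ℚ) (hu : StrictMono u) (hv : StrictMono v) :
    ∃ φ : ℚ ≃o ℚ, ∀ k, φ (u k) = v k := by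
  obtain ⟨φ, hφ⟩ := extend_aux (Finset.univ.image u) (Function.extend u v 0) (by
    intro s hs t ht hst
    simp only [Finset.coe_image, Finset.coe_univ, Set.image_univ, Set.mem_range] at hs ht
    obtain ⟨j, rfl⟩ := hs
    obtain ⟨k, rfl⟩ := ht
    rw [hu.injective.extend_apply, hu.injective.extend_apply]
    exact hv (hu.lt_iff_lt.1 hst))
  refine ⟨φ, fun k => ?_⟩
  rw [hφ (u k) (by simp), hu.injective.extend_apply]

theorem nth_eq_aux (s : Finset ℕ) (n : ℕ) (hs : s.card = n) (k : Fin n) :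
    nth s k = s.orderEmbOfFin hs k := by
  rw [nth, Finset.orderEmbOfFin_apply, List.getD_eq_getElem _ _ (by simp [hs])]
  rfl

/-- tuple of `s` -/
def tup (s : Finset ℕ) (n : ℕ) (k : Fin n) : ℚ := (nth s k : ℚ)

theorem tup_mono (s : Finset ℕ) (n : ℕ) (hs : s.card = n) : StrictMono (tup s n) := by
  intro j k hjk
  simp only [tup, nth_eq_aux s n hs]
  exact_mod_cast (s.orderEmbOfFin hs).strictMono hjk

theorem mem_iff_nth_aux (s : Finset ℕ) (n : ℕ) (hs : s.card = n) (t : ℕ) :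
    t ∈ s ↔ ∃ k : Fin n, nth s k = t := by
  have := Set.ext_iff.1 (s.range_orderEmbOfFin hs) t
  simp only [Set.mem_range, Finset.mem_coe] at this
  rw [← this]
  simp only [nth_eq_aux s n hs]

theorem tup_image (s : Finset ℕ) (n : ℕ) (hs : s.card = n) :
    Finset.univ.image (tup s n) = s.image (fun k : ℕ => (k : ℚ)) := by
  ext t
  simp only [Finset.mem_image, Finset.mem_univ, true_and, tup, mem_iff_nth_aux s n hs]
  constructor
  · rintro ⟨k, rfl⟩; exact ⟨_, ⟨k, rfl⟩, rfl⟩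
  · rintro ⟨_, ⟨k, rfl⟩, rfl⟩; exact ⟨k, rfl⟩

theorem avoid_aux (φ : ℚ ≃o ℚ) (t : ℚ) (ht : φ t ≠ t) (a : Finset ℚ) :
    ∃ N : ℕ, t ∉ a.image (φ^[N]) := by
  have hinj : Function.Injective (fun N : ℕ => φ.symm^[N] t) := by
    rcases lt_or_gt_of_ne ht with h | h
    · have h' : t < φ.symm t := by rw [OrderIso.lt_symm_apply]; exact h
      exact (φ.symm.strictMono.strictMono_iterate_of_lt_map h').injective
    · have h' : φ.symm t < t := by rw [OrderIso.symm_apply_lt]; exact h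
      exact (φ.symm.strictMono.strictAnti_iterate_of_map_lt h').injective
  by_contra! hcon
  have hsub : Set.range (fun N : ℕ => φ.symm^[N] t) ⊆ (a : Set ℚ) := by
    rintro _ ⟨N, rfl⟩
    obtain ⟨s, hs, hst⟩ := Finset.mem_image.1 (hcon N)
    have hl : Function.LeftInverse φ.symm φ := φ.symm_apply_apply
    have : φ.symm^[N] t = s := by rw [← hst]; exact hl.iterate N s
    simpa [this] using hs
  exact Set.infinite_range_of_injective hinj (a.finite_toSet.subset hsub)

theorem cast_image_aux (s : Finset ℕ) :
    (s.image (fun k : ℕ => (k : ℚ))).image (fun r : ℚ => r.num.toNat) = s := by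
  rw [Finset.image_image]
  have : ((fun r : ℚ => r.num.toNat) ∘ fun k : ℕ => (k : ℚ)) = id := by funext k; simp
  rw [this, Finset.image_id]

theorem cast_card_aux (s : Finset ℕ) : (s.image (fun k : ℕ => (k : ℚ))).card = s.card :=
  Finset.card_image_of_injective _ Nat.cast_injective

theorem refl_aux (n : ℕ) (P : Set (Set (Finset ℕ))) (hP : IsPartitionOn (cube n) P)
    (s : Finset ℕ) (hs : s.card = n) : EquivP P s s := by
  have : s ∈ ⋃₀ P := by rw [hP.1]; exact hs
  obtain ⟨A, hA, h⟩ := this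
  exact ⟨A, hA, h, h⟩

theorem relQ_of_equiv_aux (n : ℕ) (P : Set (Set (Finset ℕ))) (Q : Set (Finset ℕ))
    (hQ : Q ∈ Atoms n P) (X : Set ℕ) (hX : X.Infinite)
    (hXQ : ∀ z : Finset ℕ, ↑z ⊆ X → z.card = 2 * n → z ∈ Q) (x y : Finset ℕ)
    (hx : ↑x ⊆ X) (hy : ↑y ⊆ X) (hxc : x.card = n) (hyc : y.card = n) (h : EquivP P x y) :
    RelQ n P Q X x y := by
  have hc := Finset.card_union_le x y
  obtain ⟨z, hz1, hz2, hz3⟩ := hX.exists_superset_ncard_eq (s := ((x ∪ y : Finset ℕ) : Set ℕ))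
    (by simp [hx, hy]) (Finset.finite_toSet _) (k := 2 * n) (by
      rw [Set.ncard_coe_finset]; omega)
  by_cases hn : n = 0
  · subst hn
    have hx0 : x = ∅ := Finset.card_eq_zero.1 hxc
    have hy0 : y = ∅ := Finset.card_eq_zero.1 hyc
    subst hx0; subst hy0
    refine ⟨∅, by simp [idx], ∅, by simp [idx], ?_, ∅, by simp, by simp, by simp, by simp⟩
    exact atom_sub_aux 0 P Q hQ ∅ ∅ (by simp [idx]) (by simp [idx]) ∅ (hXQ _ (by simp) (by simp))
      ⟨by simp, by simpa using h⟩
  have hzf : z.Finite := Set.finite_of_ncard_ne_zero (by omega)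
  lift z to Finset ℕ using hzf
  rw [Set.ncard_coe_finset] at hz3
  have hz1' : x ∪ y ⊆ z := by exact_mod_cast hz1
  obtain ⟨p, hp, hp'⟩ := exists_idx_aux n z x hz3 (Finset.subset_union_left.trans hz1') hxc
  obtain ⟨q, hq, hq'⟩ := exists_idx_aux n z y hz3 (Finset.subset_union_right.trans hz1') hyc
  have hp1 := hp' id (strictMono_id.strictMonoOn _)
  have hq1 := hq' id (strictMono_id.strictMonoOn _)
  simp only [Finset.image_id] at hp1 hq1
  refine ⟨p, hp, q, hq, ?_, z, hz2, hz3, hp1, hq1⟩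
  refine atom_sub_aux n P Q hQ p q hp hq z (hXQ z hz2 hz3) ⟨hz3, ?_⟩
  rw [hp1, hq1]; exact h

/-- let `x ∈ [X⁻]^n`, `i < n` with `i ∉ I(Q)`, `x' ∈ X`,
`y = (x ∖ {x_[i]}) ∪ {x'}`, `min(d(x), d(y)) ≥ m = n^{n·B·(B-1)}`, and either
(`i ≥ 1` and `x_[i-1] < x' ≤ x_[i]`) or (`i = 0` and `e < x' ≤ x_[0]`).
Then `x ↔_Q y`. -/
theorem stmt_14 (n : ℕ) (hn : 2 ≤ n) (P : Set (Set (Finset ℕ)))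
    (hP : IsPartitionOn (cube n) P) (Q : Set (Finset ℕ)) (hQ : Q ∈ Atoms n P)
    (X : Set ℕ) (hX : X.Infinite)
    (hXQ : ∀ z : Finset ℕ, ↑z ⊆ X → z.card = 2 * n → z ∈ Q)
    (e : ℕ) (he : e = sInf X)
    (m : ℕ) (hm : m = n ^ (n * Nat.choose (2 * n) n * (Nat.choose (2 * n) n - 1)))
    (x : Finset ℕ) (hx : ↑x ⊆ X \ {e}) (hxc : x.card = n)
    (i : ℕ) (hi : i < n) (hiI : i ∉ IofQ n P Q)
    (x' : ℕ) (hx' : x' ∈ X)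
    (y : Finset ℕ) (hy : y = x.erase (nth x i) ∪ {x'})
    (hdx : (m : ℕ∞) ≤ sparsity X e x) (hdy : (m : ℕ∞) ≤ sparsity X e y)
    (hrange : (1 ≤ i ∧ nth x (i - 1) < x' ∧ x' ≤ nth x i) ∨
      (i = 0 ∧ e < x' ∧ x' ≤ nth x 0)) :
    RelQ n P Q X x y := by
  classical
  have hxX : (x : Set ℕ) ⊆ X := hx.trans Set.sdiff_subset
  set xi := nth x i with hxi
  have hxix : xi ∈ x := (mem_iff_nth_aux x n hxc xi).2 ⟨⟨i, hi⟩, rfl⟩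
  have hle : x' ≤ xi := by
    rcases hrange with h | ⟨rfl, _, h⟩
    · exact h.2.2
    · exact h
  rcases hle.eq_or_lt with heq | hlt
  · have hyx : y = x := by
      rw [hy, heq]
      ext t
      simp only [Finset.mem_union, Finset.mem_erase, Finset.mem_singleton]
      constructor
      · rintro (h | rfl)
        · exact h.2
        · exact hxix
      · intro h; by_cases h' : t = xi <;> simp [h, h']
    rw [hyx]
    exact relQ_of_equiv_aux n P Q hQ X hX hXQ x x hxX hxX hxc hxc (refl_aux n P hP x hxc)
  have hmono : ∀ j k : ℕ, j < n → k < n → j < k → nth x j < nth x k := by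
    intro j k hj hk hjk
    have := tup_mono x n hxc (a := ⟨j, hj⟩) (b := ⟨k, hk⟩) hjk
    simpa [tup] using this
  have hgap : ∀ s ∈ x, s ≠ xi → s < x' ∨ xi < s := by
    intro s hs hne
    obtain ⟨k, rfl⟩ := (mem_iff_nth_aux x n hxc s).1 hs
    rcases lt_trichotomy (k : ℕ) i with h | h | h
    · left
      rcases hrange with h' | h'
      · rcases (Nat.le_sub_one_of_lt h).eq_or_lt with h2 | h2
        · rw [h2]; exact h'.2.1
        · exact (hmono _ _ k.2 (by omega) h2).trans h'.2.1
      · omega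
    · exact absurd (by rw [h]) hne
    · right; exact hmono _ _ hi k.2 h
  have hx'x : x' ∉ x := by
    intro h
    rcases hgap x' h hlt.ne with h | h
    · exact lt_irrefl _ h
    · omega
  have hyX : (y : Set ℕ) ⊆ X := by
    intro t ht
    rw [hy] at ht
    simp only [Finset.coe_union, Finset.coe_erase, Finset.coe_singleton, Set.union_singleton,
      Set.mem_insert_iff] at ht
    rcases ht with rfl | ht
    · exact hx'
    · exact hxX ht.1
  have hyc : y.card = n := by
    rw [hy, Finset.card_union_of_disjoint, Finset.card_erase_of_mem hxix, hxc]
    · simp; omega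
    · rw [Finset.disjoint_singleton_right]
      exact fun h => hx'x (Finset.mem_of_mem_erase h)
  refine relQ_of_equiv_aux n P Q hQ X hX hXQ x y hxX hyX hxc hyc ?_
  -- pass to the rationals
  let C : Finset ℕ → Finset ℚ := fun s => s.image (fun k : ℕ => (k : ℚ))
  have hCc : ∀ s, (C s).card = s.card := cast_card_aux
  suffices hmain : RatEq P X (C x) (C y) by
    have := hmain (fun r : ℚ => r.num.toNat) (by
        intro s hs t ht hst
        rw [← Finset.image_union] at hs ht
        obtain ⟨j, _, rfl⟩ := Finset.mem_image.1 (Finset.mem_coe.1 hs)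
        obtain ⟨k, _, rfl⟩ := Finset.mem_image.1 (Finset.mem_coe.1 ht)
        have : j < k := by exact_mod_cast hst
        simpa using this) (by
        intro s hs
        rw [← Finset.image_union] at hs
        obtain ⟨j, hj, rfl⟩ := Finset.mem_image.1 hs
        rcases Finset.mem_union.1 hj with hj | hj
        · simpa using hxX hj
        · simpa using hyX hj)
    rwa [cast_image_aux, cast_image_aux] at this
  -- extract p, q
  obtain ⟨p, hp, q, hq, hpq, hne⟩ : ∃ p ∈ idx n, ∃ q ∈ idx n, Q ⊆ Qpq n P p q ∧
      nth p i ≠ nth q i := by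
    by_contra! hcon
    apply hiI
    simp only [IofQ, Set.mem_iInter]
    intro p hp q hq hpq
    exact ⟨hi, hcon p hp q hq hpq⟩
  have hp2 := Finset.mem_powersetCard.1 hp
  have hq2 := Finset.mem_powersetCard.1 hq
  have hE0 : RatEq P X (C p) (C q) := by
    obtain ⟨g, hg, hgX⟩ := exists_map_aux X hX (C (Finset.range (2 * n)))
    have hsub : C p ∪ C q ⊆ C (Finset.range (2 * n)) :=
      Finset.union_subset (Finset.image_subset_image hp2.1) (Finset.image_subset_image hq2.1)
    refine RatEq.of_exists n P Q hQ X hX hXQ _ _ (by rw [hCc, hp2.2]) (by rw [hCc, hq2.2]) g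
      (hg.mono (by exact_mod_cast hsub)) (fun s hs => hgX s (hsub hs)) ?_
    have hg' : StrictMonoOn (fun k : ℕ => g (k : ℚ)) ((Finset.range (2 * n) : Finset ℕ) : Set ℕ) := by
      intro j hj k hk hjk
      exact hg (Finset.mem_coe.2 (Finset.mem_image_of_mem _ hj))
        (Finset.mem_coe.2 (Finset.mem_image_of_mem _ hk)) (by exact_mod_cast hjk)
    have hz : (Finset.range (2 * n)).image (fun k : ℕ => g (k : ℚ)) ∈ Q := by
      refine hXQ _ ?_ (by rw [Finset.card_image_of_injOn hg'.injOn]; simp)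
      intro k hk
      obtain ⟨s, hs, rfl⟩ := Finset.mem_image.1 (Finset.mem_coe.1 hk)
      exact hgX _ (Finset.mem_image_of_mem _ hs)
    have him : ∀ r : Finset ℕ, r ⊆ Finset.range (2 * n) →
        r.image (nth ((Finset.range (2 * n)).image (fun k : ℕ => g (k : ℚ)))) = (C r).image g := by
      intro r hr
      rw [Finset.image_image]
      apply Finset.image_congr
      intro k hk
      have hk' : k < 2 * n := Finset.mem_range.1 (hr hk)
      simp only [nth]
      rw [sort_image_aux _ _ hg', Finset.sort_range, List.getD_eq_getElem _ _ (by simpa using hk')]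
      simp
    have := (hpq hz).2
    rwa [him p hp2.1, him q hq2.1] at this
  obtain ⟨φ0, hφ0⟩ := tuple_aux _ _ (tup_mono p n hp2.2) (tup_mono x n hxc)
  obtain ⟨φ, hφ⟩ := tuple_aux _ (fun k => φ0 (tup q n k)) (tup_mono x n hxc)
    (fun j k hjk => φ0.strictMono (tup_mono q n hq2.2 hjk))
  have hE1 : RatEq P X (C x) ((C x).image φ) := by
    have h := hE0.map φ0
    have e1 : (C p).image φ0 = C x := by
      change ((p.image (fun k : ℕ => (k : ℚ))).image φ0) = x.image (fun k : ℕ => (k : ℚ))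
      rw [← tup_image p n hp2.2, ← tup_image x n hxc, Finset.image_image]
      exact Finset.image_congr fun k _ => hφ0 k
    have e2 : (C q).image φ0 = (C x).image φ := by
      change ((q.image (fun k : ℕ => (k : ℚ))).image φ0) =
        (x.image (fun k : ℕ => (k : ℚ))).image φ
      rw [← tup_image q n hq2.2, ← tup_image x n hxc, Finset.image_image, Finset.image_image]
      exact Finset.image_congr fun k _ => (hφ k).symm
    rwa [e1, e2] at h
  have hmove : φ (xi : ℚ) ≠ xi := by
    have h1 := hφ ⟨i, hi⟩
    have h2 := hφ0 ⟨i, hi⟩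
    simp only [tup] at h1 h2
    rw [← hxi] at h1 h2
    rw [h1]
    intro h3
    rw [← h2] at h3
    have := φ0.injective h3
    exact hne (by exact_mod_cast this.symm)
  have hcard : ∀ N : ℕ, ((C x).image (φ^[N])).card = n := by
    intro N
    rw [Finset.card_image_of_injective _ (φ.injective.iterate N), hCc, hxc]
  have hEN : ∀ N : ℕ, RatEq P X (C x) ((C x).image (φ^[N])) := by
    intro N
    induction N with
    | zero =>
      intro g hg hgX
      simp only [Function.iterate_zero, Finset.image_id] at hg hgX ⊢
      refine refl_aux n P hP _ ?_
      rw [Finset.card_image_of_injOn (hg.injOn.mono (by simp)), hCc, hxc]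
    | succ N ih =>
      have h := ih.map φ
      rw [Finset.image_image (s := C x) (f := φ^[N]), ← Function.iterate_succ'] at h
      exact RatEq.trans n P hP Q hQ X hX hXQ _ _ _ (by rw [hCc, hxc]) (hcard _) hE1 h
  obtain ⟨N, hN⟩ := avoid_aux φ xi hmove (C x)
  set c := (C x).image (φ^[N]) with hc
  -- move x_i slightly down
  obtain ⟨t', ht', ht'2⟩ : ∃ t' : ℚ, t' < xi ∧ ∀ s ∈ (C x ∪ c), s < xi → s < t' := by
    have hfin : (((C x ∪ c).filter (fun s => s < (xi : ℚ))) : Finset ℚ).Nonempty ∨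
      ((C x ∪ c).filter (fun s => s < (xi : ℚ))) = ∅ := (Finset.eq_empty_or_nonempty _).symm
    rcases hfin with h | h
    · have hm := Finset.max'_mem _ h
      obtain ⟨t', h1, h2⟩ := exists_between (Finset.mem_filter.1 hm).2
      exact ⟨t', h2, fun s hs hlt => lt_of_le_of_lt
        (Finset.le_max' _ s (Finset.mem_filter.2 ⟨hs, hlt⟩)) h1⟩
    · refine ⟨xi - 1, by linarith, fun s hs hlt => ?_⟩
      have : s ∈ (C x ∪ c).filter (fun s => s < (xi : ℚ)) := Finset.mem_filter.2 ⟨hs, hlt⟩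
      rw [h] at this
      exact absurd this (Finset.notMem_empty _)
  obtain ⟨ψ, hψ1, hψ2⟩ := move_aux ((C x ∪ c).erase xi) xi t' (by
    intro s hs
    obtain ⟨h1, h2⟩ := Finset.mem_erase.1 hs
    rcases lt_or_gt_of_ne h1 with h | h
    · exact Or.inl ⟨h, ht'2 s h2 h⟩
    · exact Or.inr ⟨h, ht'.trans h⟩)
  have hcψ : c.image ψ = c := by
    have : c.image ψ = c.image id := Finset.image_congr fun s hs => hψ1 s (Finset.mem_erase.2
      ⟨fun h => hN (h ▸ hs), Finset.mem_union_right _ hs⟩)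
    rw [this, Finset.image_id]
  have hE2 : RatEq P X (C x) ((C x).image ψ) := by
    have h := (hEN N).map ψ
    rw [← hc, hcψ] at h
    exact RatEq.trans n P hP Q hQ X hX hXQ _ _ _ (by rw [hCc, hxc])
      (by rw [Finset.card_image_of_injective _ ψ.injective, hCc, hxc]) (hEN N) h.symm
  obtain ⟨θ, hθ1, hθ2⟩ := move_aux (C x) t' x' (by
    intro s hs
    obtain ⟨k, hk, rfl⟩ := Finset.mem_image.1 hs
    have hltq : (x' : ℚ) < xi := by exact_mod_cast hlt
    by_cases hkx : k = xi
    · subst hkx; exact Or.inr ⟨ht', hltq⟩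
    · rcases hgap k hk hkx with h | h
      · have hq' : (k : ℚ) < x' := by exact_mod_cast h
        exact Or.inl ⟨ht'2 _ (Finset.mem_union_left _ hs) (hq'.trans hltq), hq'⟩
      · have hq' : (xi : ℚ) < k := by exact_mod_cast h
        exact Or.inr ⟨ht'.trans hq', hltq.trans hq'⟩)
  have h := hE2.map θ
  have e1 : (C x).image θ = C x := by
    have : (C x).image θ = (C x).image id := Finset.image_congr fun s hs => hθ1 s hs
    rw [this, Finset.image_id]
  have e2 : ((C x).image ψ).image θ = C y := by
    have hxs : C x = insert (xi : ℚ) (C (x.erase xi)) := by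
      have : C x = C (insert xi (x.erase xi)) := by rw [Finset.insert_erase hxix]
      rw [this]; exact Finset.image_insert _ _ _
    have hys : C y = insert (x' : ℚ) (C (x.erase xi)) := by
      have : y = insert x' (x.erase xi) := by rw [hy]; ext t; simp
      rw [this]; exact Finset.image_insert _ _ _
    rw [Finset.image_image, hys, hxs, Finset.image_insert]
    congr 1
    · simp only [Function.comp, hψ2, hθ2]
    · have : (C (x.erase xi)).image (θ ∘ ψ) = (C (x.erase xi)).image id := by
        apply Finset.image_congr
        intro s hs
        obtain ⟨k, hk, rfl⟩ := Finset.mem_image.1 (Finset.mem_coe.1 hs)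
        obtain ⟨hk1, hk2⟩ := Finset.mem_erase.1 hk
        have hkC : (k : ℚ) ∈ C x := Finset.mem_image_of_mem _ hk2
        simp only [Function.comp, id]
        rw [hψ1 _ (Finset.mem_erase.2 ⟨by exact_mod_cast hk1, Finset.mem_union_left _ hkC⟩),
          hθ1 _ hkC]
      rw [this, Finset.image_id]
  rwa [e1, e2] at h
end

section
/- A nonprincipal ultrafilter u on ℕ is a Ramsey ultrafilter if and only if for every n ≥ 1 and every function f : ℕ^n → ℕ, u contains some set X such that f is either selectively upward injective on X or upward constant on X. -/
theorem aux_infinite {u : Ultrafilter ℕ} (hu : Nonprincipal u) {X : Set ℕ} (hX : X ∈ u) :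
    X.Infinite := fun h => hu X h hX

theorem aux_image_card {k : ℕ} {x : Fin k → ℕ} (hx : StrictMono x) :
    (Finset.univ.image x).card = k := by
  rw [Finset.card_image_of_injective _ hx.injective]; simp

theorem aux_emb_image {k : ℕ} {x : Fin k → ℕ} (hx : StrictMono x)
    (h : (Finset.univ.image x).card = k) :
    ((Finset.univ.image x).orderEmbOfFin h : Fin k → ℕ) = x :=
  (Finset.orderEmbOfFin_unique h (fun i => by simp) hx).symm

theorem aux_color {u : Ultrafilter ℕ} (hu : IsRamseyU u) {k : ℕ} (hk : 1 ≤ k)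
    {C : Type} [Finite C] (c : (Fin k → ℕ) → C) :
    ∃ X ∈ u, ∃ a, ∀ x : Fin k → ℕ, (∀ i, x i ∈ X) → StrictMono x → c x = a := by
  let A : C → Set (Finset ℕ) := fun a => {s | ∃ h : s.card = k, c (s.orderEmbOfFin h) = a}
  obtain ⟨X, hX, B, hB, hh⟩ := hu.2 k hk (Set.range A) (by
    constructor
    · ext s
      simp [A, cube]
    · rintro _ ⟨a, rfl⟩ _ ⟨b, rfl⟩
      by_cases hab : a = b
      · right; rw [hab]
      · left
        ext s
        simp only [A, Set.mem_inter_iff, Set.mem_setOf_eq, Set.mem_empty_iff_false, iff_false]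
        rintro ⟨⟨h, h1⟩, ⟨h', h2⟩⟩
        exact hab (h1.symm.trans h2)) (Set.finite_range A)
  obtain ⟨a, rfl⟩ := hB
  refine ⟨X, hX, a, fun x hx hm => ?_⟩
  obtain ⟨h, h1⟩ := hh (Finset.univ.image x) (by
    intro m hm'
    simp at hm'
    obtain ⟨i, rfl⟩ := hm'
    exact hx i) (aux_image_card hm)
  rwa [aux_emb_image hm] at h1

theorem aux_factor {n : ℕ} {x y : Fin n → ℕ} (hx : StrictMono x) (hy : StrictMono y) :
    ∃ (z : Fin (2 * n) → ℕ) (p q : Fin n → Fin (2 * n)), StrictMono z ∧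
      x = z ∘ p ∧ y = z ∘ q := by
  obtain ⟨t, ht, htc⟩ := Infinite.exists_superset_card_eq
    (Finset.univ.image x ∪ Finset.univ.image y) (2 * n) (by
      refine (Finset.card_union_le _ _).trans ?_
      rw [aux_image_card hx, aux_image_card hy]; omega)
  have hr : Set.range (t.orderEmbOfFin htc) = ↑t := Finset.range_orderEmbOfFin t htc
  have h1 : ∀ i, ∃ j, t.orderEmbOfFin htc j = x i := fun i => by
    have : x i ∈ (t : Set ℕ) := ht (by simp)
    rwa [← hr] at this
  have h2 : ∀ i, ∃ j, t.orderEmbOfFin htc j = y i := fun i => by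
    have : y i ∈ (t : Set ℕ) := ht (by simp)
    rwa [← hr] at this
  choose p hp using h1
  choose q hq using h2
  exact ⟨t.orderEmbOfFin htc, p, q, (t.orderEmbOfFin htc).strictMono,
    funext fun i => (hp i).symm, funext fun i => (hq i).symm⟩

/-- Coordinate `i` does not matter for `g`. -/
def AuxInert {n : ℕ} (g : (Fin n → ℕ) → ℕ) (i : Fin n) : Prop :=
  ∀ w w' : Fin n → ℕ, StrictMono w → StrictMono w' → (∀ j, j ≠ i → w j = w' j) → g w = g w'

theorem aux_insert {n : ℕ} {w w' : Fin n → ℕ} {i : Fin n} (hw : StrictMono w)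
    (hw' : StrictMono w') (h : ∀ j, j ≠ i → w j = w' j) (hlt : w i < w' i) :
    ∃ z : Fin (n + 1) → ℕ, StrictMono z ∧ w = z ∘ i.succ.succAbove ∧
      w' = z ∘ i.castSucc.succAbove := by
  let Z : Fin (n + 1) → ℕ := fun m =>
    if hm : m.val ≤ i.val then w ⟨m.val, by omega⟩ else w' ⟨m.val - 1, by omega⟩
  refine ⟨Z, ?_, ?_, ?_⟩
  · intro a b hab
    have hab' : a.val < b.val := hab
    simp only [Z]
    split_ifs with h1 h2 h2
    · exact hw (Fin.mk_lt_mk.2 hab')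
    · have e1 : w ⟨a.val, by omega⟩ ≤ w i := hw.monotone (by simpa [Fin.le_def] using h1)
      have e2 : w' i ≤ w' ⟨b.val - 1, by omega⟩ :=
        hw'.monotone (by simp only [Fin.le_def]; omega)
      omega
    · omega
    · exact hw' (by simp only [Fin.lt_def]; omega)
  · funext j
    simp only [Z, Function.comp, Fin.succAbove, Fin.lt_def]
    by_cases hj : j.val ≤ i.val
    · simp [hj, Nat.lt_succ_iff]
    · have : j ≠ i := by rintro rfl; simp at hj
      have h3 : ¬ (j.val < i.val + 1) := by omega
      have h4 : ¬ (j.val + 1 ≤ i.val) := by omega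
      simp [h3, h4, h j this]
  · funext j
    simp only [Z, Function.comp, Fin.succAbove, Fin.lt_def]
    by_cases hj : j.val < i.val
    · have : j ≠ i := by rintro rfl; simp at hj
      simp [hj, hj.le, h j this]
    · have h4 : ¬ (j.val + 1 ≤ i.val) := by omega
      simp [hj, h4]

theorem aux_inert_of {n : ℕ} {g : (Fin n → ℕ) → ℕ} {i : Fin n}
    (hB : ∀ z z' : Fin (n + 1) → ℕ, StrictMono z → StrictMono z' →
      g (z ∘ i.succ.succAbove) = g (z ∘ i.castSucc.succAbove) →
      g (z' ∘ i.succ.succAbove) = g (z' ∘ i.castSucc.succAbove))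
    {w w' : Fin n → ℕ} (hw : StrictMono w) (hw' : StrictMono w')
    (h : ∀ j, j ≠ i → w j = w' j) (hlt : w i < w' i) (hg : g w = g w') : AuxInert g i := by
  obtain ⟨z, hz, e1, e2⟩ := aux_insert hw hw' h hlt
  rw [e1, e2] at hg
  have key : ∀ v v' : Fin n → ℕ, StrictMono v → StrictMono v' → (∀ j, j ≠ i → v j = v' j) →
      v i < v' i → g v = g v' := by
    intro v v' hv hv' hj hl
    obtain ⟨z', hz', e1', e2'⟩ := aux_insert hv hv' hj hl
    rw [e1', e2']
    exact hB z z' hz hz' hg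
  intro v v' hv hv' hj
  rcases lt_trichotomy (v i) (v' i) with hl | hl | hl
  · exact key v v' hv hv' hj hl
  · congr 1
    funext j
    by_cases hji : j = i
    · rw [hji, hl]
    · exact hj j hji
  · exact (key v' v hv' hv (fun j hji => (hj j hji).symm) hl).symm

theorem aux_first {n : ℕ} {g : (Fin n → ℕ) → ℕ}
    (hA : ∀ h h' : ℕ → ℕ, StrictMono h → StrictMono h' → ∀ x y : Fin n → ℕ, StrictMono x →
      StrictMono y → g x = g y → g (h ∘ x) = g (h ∘ y))
    (hB : ∀ i : Fin n, ∀ z z' : Fin (n + 1) → ℕ, StrictMono z → StrictMono z' →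
      g (z ∘ i.succ.succAbove) = g (z ∘ i.castSucc.succAbove) →
      g (z' ∘ i.succ.succAbove) = g (z' ∘ i.castSucc.succAbove))
    {x y : Fin n → ℕ} (hx : StrictMono x) (hy : StrictMono y) (hg : g x = g y) (i : Fin n)
    (hi : ∀ j, y j ≠ x i) : AuxInert g i := by
  let h1 : ℕ → ℕ := fun m => 2 * m
  let h2 : ℕ → ℕ := fun m => if m = x i then 2 * m + 1 else 2 * m
  have m1 : StrictMono h1 := fun a b hab => by simp only [h1]; omega
  have m2 : StrictMono h2 := fun a b hab => by simp only [h2]; split_ifs <;> omega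
  have hy12 : h1 ∘ y = h2 ∘ y := by
    funext j; simp [h1, h2, hi j]
  have e1 := hA h1 h1 m1 m1 x y hx hy hg
  have e2 := hA h2 h2 m2 m2 x y hx hy hg
  refine aux_inert_of (hB i) (m1.comp hx) (m2.comp hx) ?_ ?_ (e1.trans (by rw [hy12, ← e2]))
  · intro j hj
    have : x j ≠ x i := fun h => hj (hx.injective h)
    simp [h1, h2, this]
  · simp [h1, h2]

theorem aux_update {n : ℕ} {x y : Fin n → ℕ} (hx : StrictMono x) (hy : StrictMono y)
    {i : Fin n} (hmin : ∀ j < i, x j = y j) (hlt : x i < y i) :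
    StrictMono (Function.update y i (x i)) := by
  intro a b hab
  by_cases ha : a = i
  · subst ha
    have hb : b ≠ a := hab.ne'
    simp only [Function.update_self, Function.update_of_ne hb]
    exact hlt.trans (hy hab)
  · by_cases hb : b = i
    · subst hb
      simp only [Function.update_self, Function.update_of_ne ha]
      rw [← hmin a hab]
      exact hx hab
    · simp only [Function.update_of_ne ha, Function.update_of_ne hb]
      exact hy hab

theorem aux_all {n : ℕ} {g : (Fin n → ℕ) → ℕ}
    (hA : ∀ h h' : ℕ → ℕ, StrictMono h → StrictMono h' → ∀ x y : Fin n → ℕ, StrictMono x →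
      StrictMono y → g x = g y → g (h ∘ x) = g (h ∘ y))
    (hB : ∀ i : Fin n, ∀ z z' : Fin (n + 1) → ℕ, StrictMono z → StrictMono z' →
      g (z ∘ i.succ.succAbove) = g (z ∘ i.castSucc.succAbove) →
      g (z' ∘ i.succ.succAbove) = g (z' ∘ i.castSucc.succAbove)) (N : ℕ) :
    ∀ x y : Fin n → ℕ, StrictMono x → StrictMono y → g x = g y →
      (Finset.univ.filter fun i => x i ≠ y i).card = N →
      ∀ i, x i ≠ y i → AuxInert g i := by
  induction N with
  | zero =>
    intro x y hx hy hg hc i hi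
    rw [Finset.card_eq_zero] at hc
    have : i ∈ Finset.univ.filter fun i => x i ≠ y i := by simp [hi]
    simp [hc] at this
  | succ N ih =>
    -- the case in which the first difference has `x i < y i`
    have key : ∀ x y : Fin n → ℕ, StrictMono x → StrictMono y → g x = g y →
      (Finset.univ.filter fun i => x i ≠ y i).card = N + 1 →
      ∀ i, (∀ j < i, x j = y j) → x i < y i → ∀ k, x k ≠ y k → AuxInert g k := by
      intro x y hx hy hg hc i hmin hlt k hk
      have hin : AuxInert g i := by
        refine aux_first hA hB hx hy hg i fun j => ?_
        rcases lt_or_ge j i with hj | hj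
        · rw [← hmin j hj]; exact (hx hj).ne
        · exact (hlt.trans_le (hy.monotone hj)).ne'
      by_cases hki : k = i
      · rwa [hki]
      have hu := aux_update hx hy hmin hlt
      refine ih x (Function.update y i (x i)) hx hu ?_ ?_ k ?_
      · rw [hg]
        refine hin _ _ hy hu fun j hj => ?_
        rw [Function.update_of_ne hj]
      · have : (Finset.univ.filter fun j => x j ≠ Function.update y i (x i) j) =
            (Finset.univ.filter fun j => x j ≠ y j).erase i := by
          ext j
          by_cases hj : j = i
          · subst hj; simp
          · simp [hj, Function.update_of_ne hj]
        rw [this, Finset.card_erase_of_mem (by simp [hlt.ne]), hc]; simp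
      · rwa [Function.update_of_ne hki]
    intro x y hx hy hg hc k hk
    have hne : (Finset.univ.filter fun i => x i ≠ y i).Nonempty := ⟨k, by simp [hk]⟩
    set i := (Finset.univ.filter fun i => x i ≠ y i).min' hne with hidef
    have hi : x i ≠ y i := by
      have := Finset.min'_mem _ hne
      rw [← hidef] at this
      simpa using this
    have hmin : ∀ j < i, x j = y j := by
      intro j hj
      by_contra hcon
      exact absurd (Finset.min'_le (Finset.univ.filter fun i => x i ≠ y i) j (by simp [hcon]))
        (not_le.mpr hj)
    rcases lt_or_gt_of_ne hi with hlt | hlt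
    · exact key x y hx hy hg hc i hmin hlt k hk
    · refine key y x hy hx hg.symm ?_ i (fun j hj => (hmin j hj).symm) hlt k hk.symm
      rw [← hc]; congr 1; ext j; simp [ne_comm]

theorem aux_max {n : ℕ} {g : (Fin n → ℕ) → ℕ} {x y : Fin n → ℕ} (hx : StrictMono x)
    (hy : StrictMono y) (h : ∀ i, ¬ AuxInert g i → x i = y i) :
    g x = g (fun i => max (x i) (y i)) := by
  let Z : ℕ → Fin n → ℕ := fun k i => if i.val < k then x i else max (x i) (y i)
  have hZ : ∀ k, StrictMono (Z k) := by
    intro k a b hab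
    have h1 := hx hab
    have h2 := hy hab
    have hab' : a.val < b.val := hab
    simp only [Z]
    split_ifs <;> omega
  have hstep : ∀ k, g (Z k) = g (Z 0) := by
    intro k
    induction k with
    | zero => rfl
    | succ k ih =>
      rw [← ih]
      by_cases hk : k < n
      · by_cases hin : AuxInert g ⟨k, hk⟩
        · refine hin _ _ (hZ _) (hZ _) fun j hj => ?_
          have : j.val ≠ k := fun e => hj (Fin.ext e)
          have e : j.val < k + 1 ↔ j.val < k := by omega
          simp only [Z, e]
        · congr 1
          funext j
          by_cases hj : j = ⟨k, hk⟩
          · subst hj; simp [Z, h _ hin]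
          · have : j.val ≠ k := fun e => hj (Fin.ext e)
            have e : j.val < k + 1 ↔ j.val < k := by omega
            simp only [Z, e]
      · congr 1
        funext j
        have e : j.val < k + 1 ↔ j.val < k := by omega
        simp only [Z, e]
  have h0 : Z 0 = fun i => max (x i) (y i) := by funext j; simp [Z]
  have hn : Z n = x := by funext j; simp [Z]
  rw [← h0, ← hstep n, hn]

theorem aux_forward {u : Ultrafilter ℕ} (hR : IsRamseyU u) {n : ℕ} (hn : 1 ≤ n)
    (f : (Fin n → ℕ) → ℕ) : ∃ X ∈ u, ∃ I : Set (Fin n), SelUpInjWrt n f X I := by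
  obtain ⟨X₁, hX₁, E, hE⟩ := aux_color hR (k := 2 * n) (by omega)
    (C := Set ((Fin n → Fin (2 * n)) × (Fin n → Fin (2 * n))))
    (fun z => {pq | f (z ∘ pq.1) = f (z ∘ pq.2)})
  obtain ⟨X₂, hX₂, J, hJ⟩ := aux_color hR (k := n + 1) (by omega) (C := Set (Fin n))
    (fun z => {i | f (z ∘ i.succ.succAbove) = f (z ∘ i.castSucc.succAbove)})
  have hX : X₁ ∩ X₂ ∈ u := Filter.inter_mem hX₁ hX₂
  have hinf : (X₁ ∩ X₂).Infinite := aux_infinite hR.1 hX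
  let φ : ℕ → ℕ := Nat.nth (· ∈ X₁ ∩ X₂)
  have hφ : StrictMono φ := Nat.nth_strictMono hinf
  have hφm : ∀ m, φ m ∈ X₁ ∩ X₂ := fun m => Nat.nth_mem_of_infinite hinf m
  have hφr : Set.range φ = X₁ ∩ X₂ := Nat.range_nth_of_infinite hinf
  let g : (Fin n → ℕ) → ℕ := fun x => f (φ ∘ x)
  have hA : ∀ h h' : ℕ → ℕ, StrictMono h → StrictMono h' → ∀ x y : Fin n → ℕ, StrictMono x →
      StrictMono y → g x = g y → g (h ∘ x) = g (h ∘ y) := by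
    intro h _ hh _ x y hx hy hg
    obtain ⟨z, p, q, hz, rfl, rfl⟩ := aux_factor hx hy
    have e1 := hE (φ ∘ z) (fun i => (hφm _).1) (hφ.comp hz)
    have e2 := hE (φ ∘ h ∘ z) (fun i => (hφm _).1) (hφ.comp (hh.comp hz))
    have e3 : (p, q) ∈ E := by rw [← e1]; exact hg
    rw [← e2] at e3
    exact e3
  have hB : ∀ i : Fin n, ∀ z z' : Fin (n + 1) → ℕ, StrictMono z → StrictMono z' →
      g (z ∘ i.succ.succAbove) = g (z ∘ i.castSucc.succAbove) →
      g (z' ∘ i.succ.succAbove) = g (z' ∘ i.castSucc.succAbove) := by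
    intro i z z' hz hz' hg
    have e1 := hJ (φ ∘ z) (fun i => (hφm _).2) (hφ.comp hz)
    have e2 := hJ (φ ∘ z') (fun i => (hφm _).2) (hφ.comp hz')
    have e3 : i ∈ J := by rw [← e1]; exact hg
    rw [← e2] at e3
    exact e3
  refine ⟨X₁ ∩ X₂, hX, {i | ¬ AuxInert g i}, ?_⟩
  have lift : ∀ x : Fin n → ℕ, (∀ i, x i ∈ X₁ ∩ X₂) → StrictMono x →
      ∃ x' : Fin n → ℕ, StrictMono x' ∧ x = φ ∘ x' := by
    intro x hx hm
    rw [← hφr] at hx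
    choose x' hx' using hx
    refine ⟨x', fun a b hab => ?_, funext fun i => (hx' i).symm⟩
    rw [← hφ.lt_iff_lt, hx', hx']
    exact hm hab
  intro x y hx hy hxm hym
  obtain ⟨x, hx', rfl⟩ := lift x hx hxm
  obtain ⟨y, hy', rfl⟩ := lift y hy hym
  constructor
  · intro hfe i hi
    by_contra hne
    exact hi (aux_all hA hB _ x y hx' hy' hfe rfl i (fun e => hne (congrArg φ e)))
  · intro h
    have h' : ∀ i, ¬ AuxInert g i → x i = y i := fun i hi => hφ.injective (h i hi)
    have e1 := aux_max hx' hy' h'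
    have e2 := aux_max hy' hx' (fun i hi => (h' i hi).symm)
    change g x = g y
    rw [e1, e2]
    congr 1
    funext i
    exact max_comm _ _

theorem aux_backward {u : Ultrafilter ℕ} (hu : Nonprincipal u)
    (H : ∀ n : ℕ, 1 ≤ n → ∀ f : (Fin n → ℕ) → ℕ, ∃ X ∈ u,
        (∃ I : Set (Fin n), I.Nonempty ∧ SelUpInjWrt n f X I) ∨
        SelUpInjWrt n f X ∅) : IsRamseyU u := by
  classical
  refine ⟨hu, fun n hn P hP hfin => ?_⟩
  have hF : ∀ s : Finset ℕ, ∃ A, s.card = n → A ∈ P ∧ s ∈ A := by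
    intro s
    by_cases hs : s.card = n
    · have : s ∈ ⋃₀ P := by rw [hP.1]; exact hs
      obtain ⟨A, hA, hsA⟩ := this
      exact ⟨A, fun _ => ⟨hA, hsA⟩⟩
    · exact ⟨∅, fun h => absurd h hs⟩
  choose F hF using hF
  obtain ⟨e, he⟩ := Set.countable_iff_exists_injOn.mp hfin.countable
  obtain ⟨X, hX, hc⟩ := H n hn (fun x => e (F (Finset.univ.image x)))
  have hinf : X.Infinite := aux_infinite hu hX
  let φ : ℕ → ℕ := Nat.nth (· ∈ X)
  have hφ : StrictMono φ := Nat.nth_strictMono hinf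
  have hφm : ∀ m, φ m ∈ X := fun m => Nat.nth_mem_of_infinite hinf m
  let T : ℕ → Fin n → ℕ := fun k j => φ (k + j.val)
  have hT : ∀ k, StrictMono (T k) := fun k a b hab => hφ (by
    have : a.val < b.val := hab
    omega)
  refine ⟨X, hX, ?_⟩
  rcases hc with ⟨I, ⟨i, hi⟩, hI⟩ | hc
  · exfalso
    have hinj : Function.Injective fun k => e (F (Finset.univ.image (T k))) := by
      intro k l hkl
      have := (hI (T k) (T l) (fun _ => hφm _) (fun _ => hφm _) (hT k) (hT l)).1 hkl i hi
      have := hφ.injective this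
      omega
    refine Set.infinite_range_of_injective hinj ((hfin.image e).subset ?_)
    rintro _ ⟨k, rfl⟩
    exact ⟨_, (hF _ (aux_image_card (hT k))).1, rfl⟩
  · refine ⟨F (Finset.univ.image (T 0)), (hF _ (aux_image_card (hT 0))).1, fun s hs hcard => ?_⟩
    have hm := (s.orderEmbOfFin hcard).strictMono
    have him : Finset.univ.image (s.orderEmbOfFin hcard) = s := by
      simp
    have h1 := (hc (s.orderEmbOfFin hcard) (T 0)
      (fun i => hs (Finset.orderEmbOfFin_mem s hcard i)) (fun _ => hφm _) hm (hT 0)).2 (by simp)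
    simp only [him] at h1
    have h2 := he (hF s hcard).1 (hF _ (aux_image_card (hT 0))).1 h1
    rw [← h2]
    exact (hF s hcard).2

/-- a nonprincipal ultrafilter `u` on `ℕ` is Ramsey iff for every `n ≥ 1`
and every `f : ℕ^n → ℕ`, `u` contains a set `X` on which `f` is either selectively upward
injective (w.r.t. some nonempty index set) or upward constant. -/
theorem stmt_17 (u : Ultrafilter ℕ) (hu : Nonprincipal u) :
    IsRamseyU u ↔
      ∀ n : ℕ, 1 ≤ n → ∀ f : (Fin n → ℕ) → ℕ, ∃ X ∈ u,
        (∃ I : Set (Fin n), I.Nonempty ∧ SelUpInjWrt n f X I) ∨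
        SelUpInjWrt n f X ∅ := by
  refine ⟨fun hR n hn f => ?_, aux_backward hu⟩
  obtain ⟨X, hX, I, hI⟩ := aux_forward hR hn f
  refine ⟨X, hX, ?_⟩
  rcases I.eq_empty_or_nonempty with h | h
  · right; rwa [h] at hI
  · exact Or.inl ⟨I, h, hI⟩
end

section
/- Let u be a nonprincipal ultrafilter on ℕ, let n, m, k be natural numbers, let f : ℕ^n → ℕ and g : ℕ^m → ℕ, let p be an n-element subset of {0,…,k−1} and q an m-element subset of {0,…,k−1}, and suppose there is a set X ∈ u such that f(x_{p_[0]}, x_{p_[1]}, …, x_{p_[n−1]}) = g(x_{q_[0]}, x_{q_[1]}, …, x_{q_[m−1]}) for all x_0 < x_1 < … < x_{k−1} from X. Then the diagonal ultrafilter extensions agree: f̃(u, u, …, u) = g̃(u, u, …, u) (n arguments and m arguments respectively). -/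
theorem mem_tensorPow_succ (u : Ultrafilter ℕ) (n : ℕ) (S : Set (Fin (n + 1) → ℕ)) :
    S ∈ tensorPow u (n + 1) ↔ {a : ℕ | {y | (Fin.cons a y : Fin (n + 1) → ℕ) ∈ S} ∈ tensorPow u n} ∈ u :=
  Iff.rfl

theorem tensorPow_increasing (u : Ultrafilter ℕ) (hu : Nonprincipal u) (k : ℕ) :
    ∀ X ∈ u, {y : Fin k → ℕ | (∀ i, y i ∈ X) ∧ StrictMono y} ∈ tensorPow u k := by
  induction k with
  | zero =>
    intro X _
    refine Filter.mem_of_superset Filter.univ_mem fun y _ => ⟨fun i => i.elim0, fun i => i.elim0⟩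
  | succ k ih =>
    intro X hX
    rw [mem_tensorPow_succ]
    refine Filter.mem_of_superset hX fun a ha => ?_
    have h1 : Set.Ioi a ∈ u := by
      have h := hu (Set.Iic a) (Set.finite_Iic a)
      rw [← Ultrafilter.compl_mem_iff_notMem, Set.compl_Iic] at h
      exact h
    refine Filter.mem_of_superset (ih (X ∩ Set.Ioi a) (Filter.inter_mem hX h1)) ?_
    rintro y ⟨hy, hm⟩
    refine ⟨fun i => ?_, fun i j hij => ?_⟩
    · refine Fin.cases ?_ (fun i => ?_) i
      · simpa using ha
      · simpa using (hy i).1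
    · induction j using Fin.cases with
      | zero => simp at hij
      | succ j =>
        induction i using Fin.cases with
        | zero => simpa using (hy j).2
        | succ i => simpa using hm (Fin.succ_lt_succ_iff.1 hij)

theorem tensorPow_proj (u : Ultrafilter ℕ) (k : ℕ) :
    ∀ (n : ℕ) (σ : Fin n → Fin k), StrictMono σ →
      (tensorPow u k).map (fun y => y ∘ σ) = tensorPow u n := by
  induction k with
  | zero =>
    intro n σ _
    cases n with
    | succ n => exact (σ 0).elim0
    | zero =>
      have : (fun y : Fin 0 → ℕ => y ∘ σ) = id := by
        funext y; exact Subsingleton.elim _ _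
      rw [this, Ultrafilter.map_id]
  | succ k ih =>
    intro n σ hσ
    by_cases h0 : ∀ i, σ i ≠ 0
    · have hτ : StrictMono (fun i => (σ i).pred (h0 i)) := fun i j hij => by
        simpa using hσ hij
      rw [← ih n _ hτ]
      ext S
      rw [Ultrafilter.mem_map, mem_tensorPow_succ, Ultrafilter.mem_map]
      have key : ∀ a (y : Fin k → ℕ), (Fin.cons a y : Fin (k + 1) → ℕ) ∘ σ
          = y ∘ (fun i => (σ i).pred (h0 i)) := by
        intro a y
        funext i
        obtain ⟨j, hj⟩ := Fin.exists_succ_eq.2 (h0 i)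
        simp [← hj]
      simp only [Set.mem_preimage, key]
      by_cases hS : (fun y : Fin k → ℕ => y ∘ (fun i => (σ i).pred (h0 i))) ⁻¹' S ∈ tensorPow u k
      · exact iff_of_true (Filter.mem_of_superset Filter.univ_mem fun a _ => hS) hS
      · refine iff_of_false (fun h => ?_) hS
        obtain ⟨a, ha⟩ := u.nonempty_of_mem h
        exact hS ha
    · push Not at h0
      obtain ⟨i, hi⟩ := h0
      cases n with
      | zero => exact i.elim0
      | succ n =>
        have h00 : σ 0 = 0 := le_antisymm (hi ▸ hσ.monotone (Fin.zero_le i)) (Fin.zero_le _)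
        have hs : ∀ j : Fin n, σ j.succ ≠ 0 := fun j hj => by
          have := hσ (Fin.succ_pos j)
          rw [h00, hj] at this
          exact lt_irrefl _ this
        have hτ : StrictMono (fun j : Fin n => (σ j.succ).pred (hs j)) := fun i j hij => by
          simpa using hσ (Fin.succ_lt_succ_iff.2 hij)
        ext S
        rw [Ultrafilter.mem_map, mem_tensorPow_succ, mem_tensorPow_succ, ← ih n _ hτ]
        have key : ∀ a (y : Fin k → ℕ), (Fin.cons a y : Fin (k + 1) → ℕ) ∘ σ
            = (Fin.cons a (y ∘ (fun j : Fin n => (σ j.succ).pred (hs j))) : Fin (n + 1) → ℕ) := by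
          intro a y
          funext i
          induction i using Fin.cases with
          | zero => simp [h00]
          | succ i =>
            obtain ⟨j, hj⟩ := Fin.exists_succ_eq.2 (hs i)
            simp [← hj]
        simp only [Set.mem_preimage, key, Ultrafilter.mem_map]
        rfl

theorem exists_index (n k : ℕ) (p : Finset ℕ) (hp : p ⊆ Finset.range k) (hpc : p.card = n) :
    ∃ σ : Fin n → Fin k, StrictMono σ ∧ ∀ i, (σ i : ℕ) = nth p i := by
  refine ⟨fun i => ⟨p.orderEmbOfFin hpc i,
    Finset.mem_range.1 (hp (Finset.orderEmbOfFin_mem p hpc i))⟩, fun i j hij => ?_, fun i => ?_⟩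
  · exact (p.orderEmbOfFin hpc).strictMono hij
  · simp [nth, Finset.orderEmbOfFin_apply, hpc]

/-- if `f(x_{p_[0]}, …, x_{p_[n-1]}) = g(x_{q_[0]}, …, x_{q_[m-1]})` for all
increasing `k`-tuples `x_0 < … < x_{k-1}` from some set `X ∈ u`, then the diagonal
ultrafilter extensions agree: `f̃(u, …, u) = g̃(u, …, u)`. -/
theorem stmt_18 (u : Ultrafilter ℕ) (hu : Nonprincipal u) (n m k : ℕ)
    (f : (Fin n → ℕ) → ℕ) (g : (Fin m → ℕ) → ℕ)
    (p q : Finset ℕ) (hp : p ⊆ Finset.range k) (hpc : p.card = n)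
    (hq : q ⊆ Finset.range k) (hqc : q.card = m)
    (X : Set ℕ) (hXu : X ∈ u)
    (hfg : ∀ x : ℕ → ℕ, (∀ i < k, x i ∈ X) → StrictMonoOn x (Set.Iio k) →
      f (fun i => x (nth p i)) = g (fun j => x (nth q j))) :
    diagExt f u = diagExt g u := by
  obtain ⟨σ, hσ, hσp⟩ := exists_index n k p hp hpc
  obtain ⟨τ, hτ, hτq⟩ := exists_index m k q hq hqc
  unfold diagExt
  rw [← tensorPow_proj u k n σ hσ, ← tensorPow_proj u k m τ hτ, Ultrafilter.map_map,
    Ultrafilter.map_map]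
  apply Ultrafilter.coe_injective
  rw [Ultrafilter.coe_map, Ultrafilter.coe_map]
  apply Filter.map_congr
  filter_upwards [tensorPow_increasing u hu k X hXu] with y hy
  have h := hfg (fun i => if h : i < k then y ⟨i, h⟩ else 0)
    (fun i hi => by simpa [hi] using hy.1 ⟨i, hi⟩)
    (fun i hi j hj hij => by
      have hi' : i < k := hi
      have hj' : j < k := hj
      have := hy.2 (show (⟨i, hi'⟩ : Fin k) < ⟨j, hj'⟩ from hij)
      simpa [hi', hj'] using this)
  simp only [← hσp, ← hτq, Fin.is_lt, dite_true, Fin.eta] at h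
  exact h
end
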